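/- arXiv:1302.5394 — 3 statements merged into one kernel-verified Lean document; each statement's English description precedes it below -/
import Mathlib

section
/- (Schrijver) For all positive integers n and k with n ≥ 2k, the chromatic number of the graph KG^2(n,k)_{2-stab} (the Schrijver graph, whose vertices are the 2-stable k-subsets of [n] with two vertices adjacent when disjoint) equals n − 2k + 2. -/
open Finset

/-- A proper `t`-coloring of the Kneser hypergraph `KG^r(F)`: vertices are the members of `F`,
colors are taken in `{1,...,t}`, and no set of `r` pairwise disjoint members of `F`
(an edge) is monochromatic. -/
def IsKneserColoring (n r t : ℕ) (F : Finset (Finset (Fin n)))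
    (c : Finset (Fin n) → ℕ) : Prop :=
  (∀ A ∈ F, c A ∈ Finset.Icc 1 t) ∧
    ∀ E : Finset (Finset (Fin n)), E ⊆ F → E.card = r →
      ((E : Set (Finset (Fin n))).Pairwise fun A B => Disjoint A B) →
      ¬ ∃ i, ∀ A ∈ E, c A = i

/-- The chromatic number of the Kneser hypergraph `KG^r(F)`. -/
noncomputable def kneserChrom (n r : ℕ) (F : Finset (Finset (Fin n))) : ℕ :=
  sInf {t | ∃ c, IsKneserColoring n r t F c}

/-- A subset `A` of `[n]` (identified with `Fin n`) is `s`-stable: any two distinct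
elements `i, j ∈ A` satisfy `s ≤ |i - j| ≤ n - s`. -/
def Stable (n s : ℕ) (A : Finset (Fin n)) : Prop :=
  ∀ i ∈ A, ∀ j ∈ A, i ≠ j →
    s ≤ max i.val j.val - min i.val j.val ∧ max i.val j.val - min i.val j.val ≤ n - s

open Classical in
/-- The vertex set of the `s`-stable Kneser hypergraph `KG^r(n,k)_{s-stab}`:
all `s`-stable `k`-element subsets of `[n]`. -/
noncomputable def stableSets (n s k : ℕ) : Finset (Finset (Fin n)) :=
  Finset.univ.filter fun A => A.card = k ∧ Stable n s A

/-!
Nonzero sign vectors on `[n]` are the faces of the cross-polytope. Label them antipodally by nonzero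
integers so that no two comparable ones have opposite labels. Ky Fan's lemma says that the number of
full flags whose `n` labels, sorted by absolute value, alternate in sign and end with a positive one
is odd. It goes by induction on the dimension, since modulo 2 the indicator of the alternating label
sets ending with `+` has as coboundary the indicator of all alternating label sets. Labels in
`±1, ..., ±m` thus force `n ≤ m`. In particular a monotone function `v` with `v X ≠ v (-X)` has a
value at least `n`: label `X` by `v X` if `v X > v (-X)`, and by `-v (-X)` otherwise.

For a proper colouring of the 2-stable `k`-sets with colours `1, ..., t`, let `v X` be `2k - 2` plus
the largest colour of a 2-stable `k`-set on which `X` is constantly `+`, provided that such sets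
exist both for `X` and for `-X`; otherwise let `v X` be the largest number of alternating signs of
`X` that end with `+`. In an alternating sequence of length `2k` the positive entries form a
2-stable `k`-set, and so do the negative ones. Hence values of the second kind are at most `2k - 1`,
which makes `v` monotone. Disjoint sets have distinct colours, so `v X ≠ v (-X)`, and therefore
`n ≤ 2k - 2 + t`.
-/

lemma signType_eq_or_eq_neg {a b : SignType} (ha : a ≠ 0) (hb : b ≠ 0) : a = b ∨ a = -b := by
  decide +revert

section Alternating

variable {α β γ : Type*} [LinearOrder β] {κ : α → β} {σ : α → SignType} {ε : SignType}
  {S : Finset α}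

/-- The elements of `S`, listed by decreasing `κ`, have the signs `ε, -ε, ε, ...` under `σ`.
It serves both for the coordinates of a sign vector, listed from the last to the first, and for
nonzero integer labels, listed by decreasing absolute value. -/
def IsAlternating (κ : α → β) (σ : α → SignType) (ε : SignType) (S : Finset α) : Prop :=
  ∀ a ∈ S, σ a = ε * (-1) ^ #{b ∈ S | κ a < κ b}

lemma isAlternating_empty : IsAlternating κ σ ε ∅ := by simp [IsAlternating]

lemma isAlternating_neg : IsAlternating κ (-σ) ε S ↔ IsAlternating κ σ (-ε) S := by
  simp [IsAlternating, neg_eq_iff_eq_neg]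

lemma isAlternating_map (e : γ ↪ α) {S : Finset γ} :
    IsAlternating κ σ ε (S.map e) ↔ IsAlternating (κ ∘ e) (σ ∘ e) ε S := by
  simp [IsAlternating, filter_map]

lemma IsAlternating.congr {τ : α → SignType} (h : IsAlternating κ σ ε S)
    (hστ : ∀ a ∈ S, σ a = τ a) : IsAlternating κ τ ε S :=
  fun a ha => hστ a ha ▸ h a ha

lemma IsAlternating.apply_ne_zero (h : IsAlternating κ σ ε S) (hε : ε ≠ 0) {a : α} (ha : a ∈ S) :
    σ a ≠ 0 := by
  rw [h a ha]
  exact mul_ne_zero hε (pow_ne_zero _ (by decide))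

lemma IsAlternating.apply_eq_of_forall_le (h : IsAlternating κ σ ε S) {a : α} (ha : a ∈ S)
    (hmax : ∀ b ∈ S, κ b ≤ κ a) : σ a = ε := by
  rw [h a ha, filter_false_of_mem fun b hb => (hmax b hb).not_gt]
  simp

lemma isAlternating_insert [DecidableEq α] {a : α} (hmax : ∀ b ∈ S, κ b < κ a) :
    IsAlternating κ σ ε (insert a S) ↔ σ a = ε ∧ IsAlternating κ σ (-ε) S := by
  have ha : a ∉ S := fun h => (hmax a h).false
  have above_a : #{b ∈ insert a S | κ a < κ b} = 0 := by
    simpa [filter_insert] using fun b hb => (hmax b hb).le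
  have above (b : α) (hb : b ∈ S) :
      #{c ∈ insert a S | κ b < κ c} = #{c ∈ S | κ b < κ c} + 1 := by
    rw [filter_insert, if_pos (hmax b hb), card_insert_of_notMem (by simp [ha])]
  rw [IsAlternating, forall_mem_insert, above_a, pow_zero, mul_one]
  refine and_congr_right' (forall₂_congr fun b hb => ?_)
  rw [above b hb, pow_succ, mul_neg_one, mul_neg, neg_mul]

lemma IsAlternating.of_insert_min [DecidableEq α] {a : α} (h : IsAlternating κ σ ε (insert a S))
    (hmin : ∀ b ∈ S, κ a ≤ κ b) : IsAlternating κ σ ε S := fun b hb => by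
  rw [h b (mem_insert_of_mem hb), filter_insert, if_neg (hmin b hb).not_gt]

lemma IsAlternating.exists_subset_card_eq (h : IsAlternating κ σ ε S) {m : ℕ} (hm : m ≤ #S) :
    ∃ T ⊆ S, IsAlternating κ σ ε T ∧ #T = m := by
  classical
  induction S using Finset.induction_on_min_value κ with
  | empty => exact ⟨∅, Subset.rfl, h, by simpa [eq_comm] using hm⟩
  | insert a S ha hmin ih =>
    rw [card_insert_of_notMem ha] at hm
    obtain hm | rfl := Nat.le_succ_iff.1 hm
    · obtain ⟨T, hTS, hT⟩ := ih (h.of_insert_min hmin) hm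
      exact ⟨T, hTS.trans (subset_insert a S), hT⟩
    · exact ⟨insert a S, Subset.rfl, h, card_insert_of_notMem ha⟩

lemma lt_of_le_of_injOn_insert [DecidableEq α] {a : α} (ha : a ∉ S)
    (hκ : Set.InjOn κ (insert a S : Finset α))
    (hmax : ∀ b ∈ S, κ b ≤ κ a) {b : α} (hb : b ∈ S) : κ b < κ a :=
  (hmax b hb).lt_of_ne fun hab =>
    ha (hκ (mem_insert_of_mem hb) (mem_insert_self a S) hab ▸ hb)

lemma IsAlternating.card_filter_eq (h : IsAlternating κ σ ε S) (hκ : Set.InjOn κ S)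
    (hε : ε ≠ 0) :
    #{a ∈ S | σ a = ε} = (#S + 1) / 2 ∧ #{a ∈ S | σ a = -ε} = #S / 2 := by
  classical
  induction S using Finset.induction_on_max_value κ generalizing ε with
  | empty => simp
  | insert a S ha hmax ih =>
    have hlt (b : α) (hb : b ∈ S) : κ b < κ a := lt_of_le_of_injOn_insert ha hκ hmax hb
    obtain ⟨haε, hS⟩ := (isAlternating_insert hlt).1 h
    obtain ⟨hneg, hpos⟩ := ih hS (hκ.mono (by simp)) (SignType.neg_eq_zero_iff.not.2 hε)
    rw [neg_neg] at hpos
    have hne : ε ≠ -ε := SignType.self_eq_neg_iff.not.2 hε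
    have ha' : a ∉ {b ∈ S | σ b = ε} := fun h => ha (mem_of_mem_filter a h)
    simp only [filter_insert, haε, if_true, if_neg hne, hneg, card_insert_of_notMem ha,
      card_insert_of_notMem ha', hpos, and_true]
    omega

end Alternating

section Cochains

variable {α β : Type*} [DecidableEq α]

/-- The coboundary of the mod 2 cochain `f` on the simplex with vertex set `α`. -/
def coboundary (f : Finset α → ZMod 2) (S : Finset α) : ZMod 2 :=
  ∑ a ∈ S, f (S.erase a)

/-- The transpose of joining a chain with the vertex `a`, where the join of `a` with a simplex
that already contains `a` is zero. -/
def linkCochain (a : α) : (Finset α → ZMod 2) →+ (Finset α → ZMod 2) where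
  toFun f S := if a ∈ S then 0 else f (insert a S)
  map_zero' := by ext S; simp
  map_add' f g := by ext S; by_cases h : a ∈ S <;> simp [h]

lemma linkCochain_apply (a : α) (f : Finset α → ZMod 2) (S : Finset α) :
    linkCochain a f S = if a ∈ S then 0 else f (insert a S) := rfl

lemma linkCochain_coboundary (a : α) (f : Finset α → ZMod 2) :
    linkCochain a (coboundary f) = f + coboundary (linkCochain a f) := by
  ext S
  by_cases ha : a ∈ S
  · have hzero (b : α) (hb : b ∈ S.erase a) : linkCochain a f (S.erase b) = 0 :=
      if_pos (mem_erase.2 ⟨(ne_of_mem_erase hb).symm, ha⟩)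
    rw [Pi.add_apply, coboundary, ← add_sum_erase _ _ ha, sum_eq_zero hzero]
    simp [linkCochain_apply, ha, insert_erase ha, CharTwo.add_self_eq_zero]
  · have hcomm (b : α) (hb : b ∈ S) : f ((insert a S).erase b) = linkCochain a f (S.erase b) := by
      have hab : a ≠ b := fun h => ha (h ▸ hb)
      rw [linkCochain_apply, if_neg (by simp [ha]), erase_insert_of_ne hab]
    rw [linkCochain_apply, if_neg ha, coboundary, sum_insert ha, erase_insert ha,
      sum_congr rfl hcomm]
    rfl

open Classical in
/-- The mod 2 cochain indicating the alternating sets with leading sign `ε`. -/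
noncomputable def alternatingCochain [LinearOrder β] (κ : α → β) (σ : α → SignType)
    (ε : SignType) (S : Finset α) : ZMod 2 :=
  if IsAlternating κ σ ε S then 1 else 0

lemma alternatingCochain_insert [LinearOrder β] {κ : α → β} {σ : α → SignType} {ε : SignType}
    {S : Finset α} {a : α} (hmax : ∀ b ∈ S, κ b < κ a) :
    alternatingCochain κ σ ε (insert a S) =
      if σ a = ε then alternatingCochain κ σ (-ε) S else 0 := by
  classical
  simp only [alternatingCochain, isAlternating_insert hmax, ite_and]

-- If `S` alternates, removing its last element, or its first one when it leads with `-ε`, is the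
-- only way to reach an alternating set that leads with `ε`. Otherwise the ways come in pairs: the
-- element to be removed is one of two neighbours of equal sign.
lemma coboundary_alternatingCochain [LinearOrder β] {κ : α → β} {σ : α → SignType}
    {ε : SignType} {S : Finset α} (hκ : Set.InjOn κ S) (hσ : ∀ a ∈ S, σ a ≠ 0) (hε : ε ≠ 0) :
    coboundary (alternatingCochain κ σ ε) S =
      alternatingCochain κ σ ε S + alternatingCochain κ σ (-ε) S := by
  induction S using Finset.induction_on_max_value κ generalizing ε with
  | empty =>
    simp [coboundary, alternatingCochain, isAlternating_empty, CharTwo.add_self_eq_zero]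
  | insert a S ha hmax ih =>
    have hlt (b : α) (hb : b ∈ S) : κ b < κ a := lt_of_le_of_injOn_insert ha hκ hmax hb
    have herase (b : α) (hb : b ∈ S) : alternatingCochain κ σ ε ((insert a S).erase b) =
        if σ a = ε then alternatingCochain κ σ (-ε) (S.erase b) else 0 := by
      rw [erase_insert_of_ne fun h : a = b => ha (h ▸ hb)]
      exact alternatingCochain_insert fun c hc => hlt c (mem_of_mem_erase hc)
    have hS : ∑ b ∈ S, alternatingCochain κ σ (-ε) (S.erase b) =
        alternatingCochain κ σ (-ε) S + alternatingCochain κ σ ε S := by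
      simpa only [coboundary, neg_neg] using ih (hκ.mono (by simp))
        (fun b hb => hσ b (mem_insert_of_mem hb)) (SignType.neg_eq_zero_iff.not.2 hε)
    rw [coboundary, sum_insert ha, erase_insert ha, sum_congr rfl herase,
      alternatingCochain_insert hlt, alternatingCochain_insert hlt, neg_neg]
    have hne : ε ≠ -ε := SignType.self_eq_neg_iff.not.2 hε
    obtain haε | haε := signType_eq_or_eq_neg (hσ a (mem_insert_self a S)) hε
    · simp only [haε, if_true, if_neg hne, hS]
      rw [add_left_comm, CharTwo.add_self_eq_zero]
    · simp only [haε, if_neg hne.symm, if_true, sum_const_zero, add_comm]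

end Cochains

section SignVectors

variable {ι : Type*}

/-- The conformal order on sign vectors: `Y` extends `X` by further nonzero entries. Nonzero sign
vectors are the faces of the cross-polytope, and this is inclusion of faces. -/
def IsFace (X Y : ι → SignType) : Prop :=
  ∀ i, X i ≠ 0 → X i = Y i

lemma IsFace.refl (X : ι → SignType) : IsFace X X := fun _ _ => rfl

lemma IsFace.trans {X Y Z : ι → SignType} (hXY : IsFace X Y) (hYZ : IsFace Y Z) : IsFace X Z :=
  fun i hi => (hXY i hi).trans (hYZ i (hXY i hi ▸ hi))

lemma IsFace.ne_zero {X Y : ι → SignType} (h : IsFace X Y) (hX : X ≠ 0) : Y ≠ 0 := by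
  rintro rfl
  exact hX (funext fun i => of_not_not fun hi => hi (h i hi))

lemma IsFace.neg {X Y : ι → SignType} (h : IsFace X Y) : IsFace (-X) (-Y) := fun i hi => by
  rw [Pi.neg_apply, Pi.neg_apply, h i fun hXi => hi (by simp [hXi])]

lemma neg_signVector_ne_zero {X : ι → SignType} (hX : X ≠ 0) : -X ≠ 0 := fun h =>
  hX (funext fun i => SignType.neg_eq_zero_iff.1 (congrFun h i))

variable [DecidableEq ι]

lemma isFace_update_zero (X : ι → SignType) (i : ι) : IsFace (Function.update X i 0) X := by
  intro j hj
  obtain rfl | hji := eq_or_ne j i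
  · simp at hj
  · exact Function.update_of_ne hji _ _

variable [Fintype ι]

lemma filter_update_zero_ne_zero (X : ι → SignType) (i : ι) :
    ({j | Function.update X i 0 j ≠ 0} : Finset ι) = ({j | X j ≠ 0} : Finset ι).erase i := by
  ext j
  by_cases h : j = i <;> simp [h]

/-- The sign vectors with support `T`, that is, the orthants of the coordinate subspace `T`.
Ky Fan's lemma counts flags that end in one of them. -/
def orthants (T : Finset ι) : Finset (ι → SignType) :=
  {X | ∀ i, X i ≠ 0 ↔ i ∈ T}

lemma mem_orthants {T : Finset ι} {X : ι → SignType} :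
    X ∈ orthants T ↔ ∀ i, X i ≠ 0 ↔ i ∈ T := by
  simp [orthants]

lemma update_mem_orthants_insert {T : Finset ι} {X : ι → SignType} (hX : X ∈ orthants T) {a : ι}
    {s : SignType} (hs : s ≠ 0) : Function.update X a s ∈ orthants (insert a T) := by
  rw [mem_orthants] at hX ⊢
  intro i
  by_cases h : i = a <;> simp [h, hs, hX]

lemma update_zero_mem_orthants {T : Finset ι} {a : ι} (ha : a ∉ T) {X : ι → SignType}
    (hX : X ∈ orthants (insert a T)) : Function.update X a 0 ∈ orthants T := by
  rw [mem_orthants] at hX ⊢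
  intro i
  by_cases h : i = a <;> simp [h, ha, hX]

variable {M : Type*} [AddCommMonoid M]

lemma sum_orthants_neg (T : Finset ι) (g : (ι → SignType) → M) :
    ∑ X ∈ orthants T, g (-X) = ∑ X ∈ orthants T, g X :=
  sum_equiv (Equiv.neg _) (by simp [mem_orthants]) fun _ _ => rfl

lemma sum_orthants_insert {T : Finset ι} {a : ι} (ha : a ∉ T) (g : (ι → SignType) → M) :
    ∑ X ∈ orthants (insert a T), g X =
      ∑ X ∈ orthants T, (g (Function.update X a 1) + g (Function.update X a (-1))) := by
  rw [← sum_fiberwise_of_maps_to fun X hX => update_zero_mem_orthants ha hX]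
  refine sum_congr rfl fun X hX => ?_
  have hXa : X a = 0 := of_not_not ((mem_orthants.1 hX a).not.2 ha)
  have hfiber : {Y ∈ orthants (insert a T) | Function.update Y a 0 = X} =
      {Function.update X a 1, Function.update X a (-1)} := by
    ext Y
    rw [mem_filter, mem_insert, mem_singleton]
    constructor
    · rintro ⟨hY, rfl⟩
      have hYa : Y a ≠ 0 := (mem_orthants.1 hY a).2 (mem_insert_self a T)
      simpa [Function.eq_update_iff] using signType_eq_or_eq_neg hYa one_ne_zero
    · rintro (rfl | rfl) <;>
        exact ⟨update_mem_orthants_insert hX (by decide), by simp [← hXa]⟩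
  have hne : Function.update X a 1 ≠ Function.update X a (-1) := fun h =>
    absurd (Function.update_injective X a h) (by decide)
  rw [hfiber, sum_pair hne]

-- Flipping the `i`-th sign pairs up equal terms.
lemma sum_orthants_update_zero {T : Finset ι} {i : ι} (hi : i ∈ T)
    (g : (ι → SignType) → ZMod 2) :
    ∑ X ∈ orthants T, g (Function.update X i 0) = 0 := by
  refine sum_involution (fun X _ => Function.update X i (-X i))
    (fun X _ => ?_) (fun X hX _ hfix => ?_) (fun X hX => ?_) (fun X _ => by simp)
  · rw [Function.update_idem, CharTwo.add_self_eq_zero]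
  · have hXi : -X i = X i := by simpa using congrFun hfix i
    exact (mem_orthants.1 hX i).2 hi (SignType.neg_eq_self_iff.1 hXi)
  · rw [mem_orthants] at hX ⊢
    intro j
    by_cases h : j = i <;> simp [h, hi, hX]

end SignVectors

section Flags

-- Each unordered pair occurs twice.
lemma sum_sum_erase_eq_zero {ι : Type*} [DecidableEq ι] (T : Finset ι)
    {g : ι → ι → ZMod 2} (hg : ∀ i j, g i j = g j i) :
    ∑ i ∈ T, ∑ j ∈ T.erase i, g i j = 0 := by
  rw [sum_sigma']
  refine sum_involution (fun p _ => ⟨p.2, p.1⟩) (fun p _ => ?_) (fun p hp _ heq => ?_)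
    (fun p hp => ?_) (fun p _ => rfl)
  · rw [hg, CharTwo.add_self_eq_zero]
  · exact ne_of_mem_erase (mem_sigma.1 hp).2 (congrArg Sigma.fst heq)
  · simp only [mem_sigma, mem_erase] at hp ⊢
    exact ⟨hp.2.2, hp.2.1.symm, hp.1⟩

variable {ι α : Type*} [Fintype ι] [DecidableEq ι] [DecidableEq α] {ℓ : (ι → SignType) → α}

/-- The sum of a mod 2 cochain over the label sets of all flags `X = Xᵣ, Xᵣ₋₁, ..., X₁` in which
each sign vector arises from the previous one by erasing one nonzero entry. Flags with repeated
labels count as zero. -/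
noncomputable def flagSum (ℓ : (ι → SignType) → α) :
    ℕ → (ι → SignType) → (Finset α → ZMod 2) →+ ZMod 2
  | 0, _ => Pi.evalAddMonoidHom _ ∅
  | r + 1, X => ∑ i with X i ≠ 0, (flagSum ℓ r (Function.update X i 0)).comp (linkCochain (ℓ X))

lemma flagSum_zero (X : ι → SignType) (f : Finset α → ZMod 2) : flagSum ℓ 0 X f = f ∅ := rfl

lemma flagSum_succ (r : ℕ) (X : ι → SignType) (f : Finset α → ZMod 2) :
    flagSum ℓ (r + 1) X f =
      ∑ i with X i ≠ 0, flagSum ℓ r (Function.update X i 0) (linkCochain (ℓ X) f) := by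
  simp [flagSum]

-- The boundary of the sum of all flags ending at `X`: dropping any vector below `X` gives a flag
-- with two completions, so only the faces that omit `X` remain.
lemma flagSum_coboundary (r : ℕ) (X : ι → SignType) (f : Finset α → ZMod 2) :
    flagSum ℓ (r + 1) X (coboundary f) =
      ∑ i with X i ≠ 0, flagSum ℓ r (Function.update X i 0) f := by
  induction r generalizing X f with
  | zero => simp [flagSum_succ, flagSum_zero, linkCochain_coboundary, coboundary]
  | succ r ih =>
    rw [flagSum_succ]
    simp only [linkCochain_coboundary, map_add, sum_add_distrib, ih, filter_update_zero_ne_zero]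
    rw [sum_sum_erase_eq_zero, add_zero]
    intro i j
    obtain rfl | hij := eq_or_ne i j
    · rfl
    · rw [Function.update_comm hij]

lemma flagSum_congr {r : ℕ} {X : ι → SignType} {f g : Finset α → ZMod 2}
    (h : ∀ C : Finset (ι → SignType), (∀ Y ∈ C, Y ≠ 0 ∧ IsFace Y X) →
      IsChain IsFace (C : Set (ι → SignType)) → #(C.image ℓ) = r → f (C.image ℓ) = g (C.image ℓ)) :
    flagSum ℓ r X f = flagSum ℓ r X g := by
  induction r generalizing X f g with
  | zero => simpa [flagSum_zero] using h ∅
  | succ r ih =>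
    rw [flagSum_succ, flagSum_succ]
    refine sum_congr rfl fun i hi => ih fun C hC hchain hcard => ?_
    have hX : X ≠ 0 := fun hX => (mem_filter.1 hi).2 (congrFun hX i)
    have hCX (Y) (hY : Y ∈ C) : Y ≠ 0 ∧ IsFace Y X :=
      ⟨(hC Y hY).1, (hC Y hY).2.trans (isFace_update_zero X i)⟩
    by_cases hmem : ℓ X ∈ C.image ℓ
    · simp [linkCochain_apply, hmem]
    rw [linkCochain_apply, linkCochain_apply, if_neg hmem, if_neg hmem, ← image_insert]
    refine h (insert X C) (forall_mem_insert _ _ _ |>.2 ⟨⟨hX, .refl X⟩, hCX⟩) ?_ ?_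
    · rw [coe_insert]
      exact hchain.insert fun Y hY _ => .inr (hCX Y hY).2
    · rw [image_insert, card_insert_of_notMem hmem, hcard]

lemma flagSum_neg {e : α ↪ α} (hℓ : ∀ X, X ≠ 0 → ℓ (-X) = e (ℓ X)) (r : ℕ) (X : ι → SignType)
    (f : Finset α → ZMod 2) :
    flagSum ℓ r (-X) f = flagSum ℓ r X fun S => f (S.map e) := by
  induction r generalizing X f with
  | zero => simp [flagSum_zero]
  | succ r ih =>
    rw [flagSum_succ, flagSum_succ]
    refine sum_congr (by simp) fun i hi => ?_
    have hX : X ≠ 0 := fun hX => (mem_filter.1 hi).2 (by simp [hX])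
    have hupdate : Function.update (-X) i 0 = -Function.update X i 0 := by
      rw [← neg_zero, Function.update_neg, neg_zero]
    rw [hupdate, ih]
    congr 1
    ext S
    simp [linkCochain_apply, hℓ X hX, map_insert]

end Flags

section Tucker

variable {ι : Type*}

/-- An integer labelling of the nonzero sign vectors that is antipodal and has no complementary
edge; for the trivial edges this says that labels are nonzero. -/
structure IsTuckerLabelling (ℓ : (ι → SignType) → ℤ) : Prop where
  map_neg : ∀ X, X ≠ 0 → ℓ (-X) = -ℓ X
  ne_neg : ∀ X Y, X ≠ 0 → IsFace X Y → ℓ X ≠ -ℓ Y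

variable {ℓ : (ι → SignType) → ℤ}

lemma IsTuckerLabelling.ne_neg_of_isChain (h : IsTuckerLabelling ℓ) {C : Finset (ι → SignType)}
    (hne : ∀ X ∈ C, X ≠ 0) (hC : IsChain IsFace (C : Set (ι → SignType))) :
    ∀ a ∈ C.image ℓ, ∀ b ∈ C.image ℓ, a ≠ -b := by
  simp only [forall_mem_image]
  intro X hX Y hY
  obtain rfl | hXY := eq_or_ne X Y
  · exact h.ne_neg X X (hne X hX) (.refl X)
  obtain hface | hface := hC hX hY hXY
  · exact h.ne_neg X Y (hne X hX) hface
  · exact fun heq => h.ne_neg Y X (hne Y hY) hface (by rw [heq, neg_neg])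

lemma natAbs_injOn_of_forall_ne_neg {S : Set ℤ} (hS : ∀ a ∈ S, ∀ b ∈ S, a ≠ -b) :
    Set.InjOn Int.natAbs S := fun a ha b hb hab =>
  (Int.natAbs_eq_natAbs_iff.1 hab).resolve_right (hS a ha b hb)

lemma alternatingCochain_map_neg (ε : SignType) (S : Finset ℤ) :
    alternatingCochain Int.natAbs SignType.sign ε (S.map (Equiv.neg ℤ).toEmbedding) =
      alternatingCochain Int.natAbs SignType.sign (-ε) S := by
  have hκ : Int.natAbs ∘ Neg.neg = Int.natAbs := funext Int.natAbs_neg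
  have hσ : ⇑SignType.sign ∘ Neg.neg = -(SignType.sign : ℤ → SignType) := funext Left.sign_neg
  classical
  simp [alternatingCochain, isAlternating_map, hκ, hσ, isAlternating_neg]

variable [Fintype ι]

lemma IsTuckerLabelling.flagSum_add_flagSum_neg [DecidableEq ι] (h : IsTuckerLabelling ℓ)
    (r : ℕ) (X : ι → SignType) :
    flagSum ℓ (r + 1) X (alternatingCochain Int.natAbs SignType.sign 1) +
        flagSum ℓ (r + 1) (-X) (alternatingCochain Int.natAbs SignType.sign 1) =
      ∑ i with X i ≠ 0, flagSum ℓ r (Function.update X i 0)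
        (alternatingCochain Int.natAbs SignType.sign 1) := by
  rw [flagSum_neg (e := (Equiv.neg ℤ).toEmbedding) h.map_neg, ← map_add, ← flagSum_coboundary]
  refine flagSum_congr fun C hC hchain _ => ?_
  have hS := h.ne_neg_of_isChain (fun X hX => (hC X hX).1) hchain
  have hsign (a : ℤ) (ha : a ∈ C.image ℓ) : SignType.sign a ≠ 0 := fun h0 =>
    hS a ha a ha (by simp [sign_eq_zero_iff.1 h0])
  rw [coboundary_alternatingCochain (natAbs_injOn_of_forall_ne_neg hS) hsign one_ne_zero,
    Pi.add_apply, alternatingCochain_map_neg]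

-- Ky Fan's lemma for the cross-polytope.
lemma IsTuckerLabelling.sum_flagSum_alternatingCochain [DecidableEq ι]
    (h : IsTuckerLabelling ℓ) (T : Finset ι) :
    ∑ X ∈ orthants T, flagSum ℓ #T X (alternatingCochain Int.natAbs SignType.sign 1) = 1 := by
  set A := alternatingCochain Int.natAbs (SignType.sign : ℤ → SignType) 1
  induction T using Finset.induction_on with
  | empty =>
    have horthants : orthants (∅ : Finset ι) = {0} := by
      ext X
      simp [mem_orthants, funext_iff]
    simp [horthants, flagSum_zero, A, alternatingCochain, isAlternating_empty]
  | insert a T ha ih =>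
    have hsupport (X) (hX : X ∈ orthants T) :
        ({i | Function.update X a 1 i ≠ 0} : Finset ι) = insert a T := by
      ext i
      simpa using mem_orthants.1 (update_mem_orthants_insert hX one_ne_zero) i
    have hneg (X : ι → SignType) : Function.update (-X) a (-1) = -Function.update X a 1 :=
      Function.update_neg X a 1
    have hflip (i) (hi : i ∈ T) : ∑ X ∈ orthants T,
        flagSum ℓ #T (Function.update (Function.update X a 1) i 0) A = 0 := by
      have hai : a ≠ i := fun hai => ha (hai ▸ hi)
      simp_rw [Function.update_comm hai]
      exact sum_orthants_update_zero hi fun X => flagSum ℓ #T (Function.update X a 1) A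
    have hdrop (X) (hX : X ∈ orthants T) :
        Function.update (Function.update X a 1) a 0 = X := by
      rw [Function.update_idem, Function.update_eq_self_iff]
      exact (of_not_not ((mem_orthants.1 hX a).not.2 ha)).symm
    calc ∑ X ∈ orthants (insert a T), flagSum ℓ #(insert a T) X A
      _ = ∑ X ∈ orthants T, (flagSum ℓ (#T + 1) (Function.update X a 1) A +
            flagSum ℓ (#T + 1) (-Function.update X a 1) A) := by
          rw [sum_orthants_insert ha, card_insert_of_notMem ha, sum_add_distrib, sum_add_distrib,
            ← sum_orthants_neg T fun X => flagSum ℓ (#T + 1) (Function.update X a (-1)) A]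
          simp_rw [hneg]
      _ = ∑ X ∈ orthants T, ∑ i ∈ insert a T,
            flagSum ℓ #T (Function.update (Function.update X a 1) i 0) A :=
          sum_congr rfl fun X hX => by rw [h.flagSum_add_flagSum_neg, hsupport X hX]
      _ = ∑ X ∈ orthants T, flagSum ℓ #T (Function.update (Function.update X a 1) a 0) A := by
          rw [sum_comm, sum_insert ha, sum_eq_zero hflip, add_zero]
      _ = 1 := by rw [sum_congr rfl fun X hX => by rw [hdrop X hX], ih]

-- The octahedral Tucker lemma.
lemma IsTuckerLabelling.card_le (h : IsTuckerLabelling ℓ) {m : ℕ}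
    (hm : ∀ X, X ≠ 0 → (ℓ X).natAbs ≤ m) : Fintype.card ι ≤ m := by
  classical
  by_contra! hlt
  refine zero_ne_one ((sum_eq_zero fun X _ => ?_).symm.trans
    (h.sum_flagSum_alternatingCochain univ))
  rw [← map_zero (flagSum ℓ #(univ : Finset ι) X)]
  refine flagSum_congr fun C hC hchain hcard => absurd hcard (ne_of_lt ?_)
  have hS := h.ne_neg_of_isChain (fun X hX => (hC X hX).1) hchain
  have hmaps : Set.MapsTo Int.natAbs (C.image ℓ) (Icc 1 m : Finset ℕ) := by
    intro a ha
    obtain ⟨X, hX, rfl⟩ := mem_image.1 ha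
    have hpos : ℓ X ≠ 0 := fun h0 => hS _ ha _ ha (by simp [h0])
    exact mem_coe.2 (mem_Icc.2 ⟨Int.natAbs_pos.2 hpos, hm X (hC X hX).1⟩)
  calc #(C.image ℓ)
    _ ≤ #(Icc 1 m) := card_le_card_of_injOn _ hmaps (natAbs_injOn_of_forall_ne_neg hS)
    _ < #(univ : Finset ι) := by simpa using hlt

lemma card_le_of_forall_ne_neg {v : (ι → SignType) → ℕ} {m : ℕ}
    (hmono : ∀ X Y, X ≠ 0 → IsFace X Y → v X ≤ v Y) (hne : ∀ X, X ≠ 0 → v X ≠ v (-X))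
    (hm : ∀ X, X ≠ 0 → v X ≤ m) : Fintype.card ι ≤ m := by
  let ℓ (X : ι → SignType) : ℤ := if v (-X) < v X then v X else -v (-X)
  have hℓ : IsTuckerLabelling ℓ := by
    refine ⟨fun X hX => ?_, fun X Y hX hXY => ?_⟩
    · have hneX := hne X hX
      simp only [ℓ, neg_neg]
      split_ifs <;> omega
    · have hpos := hmono X Y hX hXY
      have hneg := hmono (-X) (-Y) (neg_signVector_ne_zero hX) hXY.neg
      have hneY := hne Y (hXY.ne_zero hX)
      simp only [ℓ]
      split_ifs <;> omega
  refine hℓ.card_le fun X hX => ?_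
  have hpos := hm X hX
  have hneg := hm (-X) (neg_signVector_ne_zero hX)
  simp only [ℓ]
  split_ifs <;> omega

lemma card_lt_add_of_forall_ne_neg {P : (ι → SignType) → Prop} {u w : (ι → SignType) → ℕ}
    {s t : ℕ} (hP_mono : ∀ X Y, IsFace X Y → P X → P Y) (hP_neg : ∀ X, P (-X) ↔ P X)
    (hu_mono : ∀ X Y, IsFace X Y → u X ≤ u Y) (hu_ne : ∀ X, X ≠ 0 → u X ≠ u (-X))
    (hu : ∀ X, ¬ P X → u X ≤ s)
    (hw_mono : ∀ X Y, IsFace X Y → w X ≤ w Y) (hw_ne : ∀ X, P X → w X ≠ w (-X))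
    (hw : ∀ X, P X → w X ∈ Icc 1 t) (hs : s < Fintype.card ι) : Fintype.card ι < s + t := by
  classical
  let v (X : ι → SignType) : ℕ := if P X then s + w X - 1 else u X
  have v_of (X) (hX : P X) : 1 ≤ w X ∧ w X ≤ t ∧ v X = s + w X - 1 := by
    simpa only [v, if_pos hX, and_true, mem_Icc, and_assoc] using hw X hX
  have v_of_not (X) (hX : ¬ P X) : u X ≤ s ∧ v X = u X := by
    simpa only [v, if_neg hX, and_true] using hu X hX
  suffices hle : Fintype.card ι ≤ max s (s + t - 1) by omega
  refine card_le_of_forall_ne_neg (v := v) (fun X Y _ hXY => ?_) (fun X hX => ?_) fun X _ => ?_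
  · have hu_le := hu_mono X Y hXY
    have hw_le := hw_mono X Y hXY
    have hP := hP_mono X Y hXY
    grind
  · grind
  · grind

end Tucker

section AlternationLength

variable {ι : Type*} [LinearOrder ι] [Fintype ι]

open Classical in
/-- The largest number of entries of a sign vector that alternate in sign and end with a
positive one. It is monotone and distinguishes nonzero antipodes. -/
noncomputable def altLen (X : ι → SignType) : ℕ :=
  ({S : Finset ι | IsAlternating id X 1 S} : Finset (Finset ι)).sup card

lemma IsAlternating.card_le_altLen {X : ι → SignType} {S : Finset ι}
    (h : IsAlternating id X 1 S) : #S ≤ altLen X := by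
  classical
  exact le_sup (f := card) (mem_filter.2 ⟨mem_univ S, h⟩)

lemma exists_isAlternating_card_eq_altLen (X : ι → SignType) :
    ∃ S : Finset ι, IsAlternating id X 1 S ∧ #S = altLen X := by
  classical
  obtain ⟨S, hS, hcard⟩ := exists_mem_eq_sup
    ({S : Finset ι | IsAlternating id X 1 S} : Finset (Finset ι))
    ⟨∅, mem_filter.2 ⟨mem_univ ∅, isAlternating_empty⟩⟩ card
  exact ⟨S, (mem_filter.1 hS).2, hcard.symm⟩

lemma altLen_mono {X Y : ι → SignType} (h : IsFace X Y) : altLen X ≤ altLen Y := by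
  obtain ⟨S, hS, hcard⟩ := exists_isAlternating_card_eq_altLen X
  rw [← hcard]
  exact (hS.congr fun a ha => h a (hS.apply_ne_zero one_ne_zero ha)).card_le_altLen

lemma altLen_lt_altLen_neg {X : ι → SignType} {t : ι} (ht : X t = -1)
    (hmax : ∀ i, X i ≠ 0 → i ≤ t) : altLen X < altLen (-X) := by
  obtain ⟨S, hS, hcard⟩ := exists_isAlternating_card_eq_altLen X
  have hle (a : ι) (ha : a ∈ S) : a ≤ t := hmax a (hS.apply_ne_zero one_ne_zero ha)
  have htS : t ∉ S := fun h =>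
    absurd (ht.symm.trans (hS.apply_eq_of_forall_le h hle)) (by decide)
  have hinsert : IsAlternating id (-X) 1 (insert t S) :=
    (isAlternating_insert fun a ha => (hle a ha).lt_of_ne fun hat => htS (hat ▸ ha)).2
      ⟨by simp [ht], by rwa [isAlternating_neg, neg_neg]⟩
  calc altLen X
    _ < #(insert t S) := by rw [card_insert_of_notMem htS, hcard]; exact Nat.lt_succ_self _
    _ ≤ altLen (-X) := hinsert.card_le_altLen

lemma altLen_ne_altLen_neg {X : ι → SignType} (hX : X ≠ 0) : altLen X ≠ altLen (-X) := by
  obtain ⟨t, ht, hmax⟩ := exists_max_image ({i | X i ≠ 0} : Finset ι) id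
    (by simpa [Finset.Nonempty] using Function.ne_iff.1 hX)
  simp only [mem_filter_univ, id] at ht hmax
  obtain ht | ht := signType_eq_or_eq_neg ht one_ne_zero
  · have h := altLen_lt_altLen_neg (X := -X) (t := t) (by simp [ht]) (by simpa using hmax)
    rw [neg_neg] at h
    exact h.ne'
  · exact (altLen_lt_altLen_neg ht hmax).ne

end AlternationLength

section Stability

lemma IsAlternating.even_card_inter_Ioc {ι : Type*} [LinearOrder ι] [LocallyFiniteOrder ι]
    {X : ι → SignType} {ε : SignType} {S : Finset ι} (h : IsAlternating id X ε S) (hε : ε ≠ 0)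
    {i j : ι} (hi : i ∈ S) (hj : j ∈ S) (hX : X i = X j) (hij : i ≤ j) : Even #(S ∩ Ioc i j) := by
  have hsplit : #{a ∈ S | i < a} = #{a ∈ S | j < a} + #(S ∩ Ioc i j) := by
    rw [← card_union_of_disjoint (by grind [disjoint_left])]
    congr 1
    grind
  by_contra hodd
  have hneg : X i = -X j := by
    rw [h i hi, h j hj]
    simp [hsplit, pow_add, (Nat.not_even_iff_odd.1 hodd).neg_one_pow]
  exact h.apply_ne_zero hε hj (SignType.self_eq_neg_iff.1 (hX ▸ hneg))

variable {n : ℕ} {X : Fin n → SignType} {ε : SignType} {S : Finset (Fin n)}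

-- Between two entries of equal sign, on either side of the circle, lies one of the opposite sign.
lemma IsAlternating.stable_filter (h : IsAlternating id X ε S) (hε : ε ≠ 0) (hS : Even #S)
    (τ : SignType) : Stable n 2 {a ∈ S | X a = τ} := by
  have hgap {i j : Fin n} (hi : i ∈ S) (hj : j ∈ S) (hX : X i = X j) (hij : i < j) :
      2 ≤ j.val - i.val ∧ j.val - i.val ≤ n - 2 := by
    obtain ⟨p, hp⟩ := h.even_card_inter_Ioc hε hi hj hX hij.le
    obtain ⟨q, hq⟩ := hS
    have htotal := card_inter_add_card_sdiff S (Ioc i j)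
    have hinside : 0 < #(S ∩ Ioc i j) := card_pos.2 ⟨j, by simp [hj, hij]⟩
    have houtside : 0 < #(S \ Ioc i j) := card_pos.2 ⟨i, by simp [hi]⟩
    have hlow : #(S ∩ Ioc i j) ≤ j - i := Fin.card_Ioc i j ▸ card_le_card inter_subset_right
    have hhigh : #(S \ Ioc i j) ≤ n - (j - i) := by
      calc #(S \ Ioc i j)
        _ ≤ #(Ioc i j)ᶜ := card_le_card fun a ha => mem_compl.2 (mem_sdiff.1 ha).2
        _ = n - (j - i) := by rw [card_compl, Fintype.card_fin, Fin.card_Ioc]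
    omega
  intro i hi j hj hij
  rw [mem_filter] at hi hj
  obtain hij | hij := hij.lt_or_gt
  · have hij_gap := hgap hi.1 hj.1 (hi.2.trans hj.2.symm) hij
    omega
  · have hji_gap := hgap hj.1 hi.1 (hj.2.trans hi.2.symm) hij
    omega

lemma mem_stableSets {n s k : ℕ} {A : Finset (Fin n)} :
    A ∈ stableSets n s k ↔ #A = k ∧ Stable n s A := by
  simp [stableSets]

lemma exists_mem_stableSets_of_two_mul_le_altLen {k : ℕ} (hX : 2 * k ≤ altLen X) {τ : SignType}
    (hτ : τ ≠ 0) : ∃ A ∈ stableSets n 2 k, ∀ a ∈ A, X a = τ := by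
  obtain ⟨S, hS, hcard⟩ := exists_isAlternating_card_eq_altLen X
  obtain ⟨T, -, hT, hcardT⟩ := hS.exists_subset_card_eq (hcard ▸ hX)
  have hstable : Stable n 2 {a ∈ T | X a = τ} :=
    hT.stable_filter one_ne_zero (by simp [hcardT]) τ
  refine ⟨_, mem_stableSets.2 ⟨?_, hstable⟩, fun a ha => (mem_filter.1 ha).2⟩
  obtain ⟨hpos, hneg⟩ := hT.card_filter_eq Function.injective_id.injOn one_ne_zero
  obtain rfl | rfl := signType_eq_or_eq_neg hτ one_ne_zero <;> omega

end Stability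

section Coloring

variable {ι : Type*} {F : Finset (Finset ι)} {X Y : ι → SignType}

/-- The members of `F` inside the positive part of `X`. Their largest colour is a function of `X`
that distinguishes antipodes. -/
def positiveMembers (F : Finset (Finset ι)) (X : ι → SignType) : Finset (Finset ι) :=
  {A ∈ F | ∀ a ∈ A, X a = 1}

lemma mem_positiveMembers {A : Finset ι} :
    A ∈ positiveMembers F X ↔ A ∈ F ∧ ∀ a ∈ A, X a = 1 :=
  mem_filter

lemma positiveMembers_mono (h : IsFace X Y) : positiveMembers F X ⊆ positiveMembers F Y :=
  fun A hA => mem_positiveMembers.2 ⟨(mem_positiveMembers.1 hA).1, fun a ha => by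
    have hXa := (mem_positiveMembers.1 hA).2 a ha
    rw [← h a (by rw [hXa]; decide), hXa]⟩

lemma disjoint_of_mem_positiveMembers {A B : Finset ι} (hA : A ∈ positiveMembers F X)
    (hB : B ∈ positiveMembers F (-X)) : Disjoint A B :=
  disjoint_left.2 fun a haA haB => by
    have hpos := (mem_positiveMembers.1 hA).2 a haA
    have hneg := (mem_positiveMembers.1 hB).2 a haB
    rw [Pi.neg_apply, hpos] at hneg
    exact absurd hneg (by decide)

variable {c : Finset ι → ℕ} {s t : ℕ}

lemma sup_positiveMembers_ne (hproper : ∀ A ∈ F, ∀ B ∈ F, Disjoint A B → c A ≠ c B)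
    (hX : (positiveMembers F X).Nonempty) (hX' : (positiveMembers F (-X)).Nonempty) :
    (positiveMembers F X).sup c ≠ (positiveMembers F (-X)).sup c := by
  obtain ⟨A, hA, hsupA⟩ := exists_mem_eq_sup _ hX c
  obtain ⟨B, hB, hsupB⟩ := exists_mem_eq_sup _ hX' c
  rw [hsupA, hsupB]
  exact hproper A (mem_positiveMembers.1 hA).1 B (mem_positiveMembers.1 hB).1
    (disjoint_of_mem_positiveMembers hA hB)

lemma sup_positiveMembers_mem_Icc (hcolor : ∀ A ∈ F, c A ∈ Icc 1 t)
    (hX : (positiveMembers F X).Nonempty) : (positiveMembers F X).sup c ∈ Icc 1 t := by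
  obtain ⟨A, hA, hsup⟩ := exists_mem_eq_sup _ hX c
  exact hsup ▸ hcolor A (mem_positiveMembers.1 hA).1

variable [LinearOrder ι] [Fintype ι]

lemma card_lt_add_of_forall_lt_altLen (hcolor : ∀ A ∈ F, c A ∈ Icc 1 t)
    (hproper : ∀ A ∈ F, ∀ B ∈ F, Disjoint A B → c A ≠ c B)
    (hF : ∀ X : ι → SignType, s < altLen X → ∀ τ ≠ 0, ∃ A ∈ F, ∀ a ∈ A, X a = τ)
    (hs : s < Fintype.card ι) : Fintype.card ι < s + t := by
  let P (X : ι → SignType) : Prop :=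
    (positiveMembers F X).Nonempty ∧ (positiveMembers F (-X)).Nonempty
  have hP_neg (X : ι → SignType) : P (-X) ↔ P X := by simp only [P, neg_neg, and_comm]
  have hP_mono (X Y : ι → SignType) (h : IsFace X Y) (hX : P X) : P Y :=
    ⟨hX.1.mono (positiveMembers_mono h), hX.2.mono (positiveMembers_mono h.neg)⟩
  have hshort (X : ι → SignType) (hX : ¬ P X) : altLen X ≤ s := by
    contrapose! hX
    obtain ⟨A, hA, hXA⟩ := hF X hX 1 (by decide)
    obtain ⟨B, hB, hXB⟩ := hF X hX (-1) (by decide)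
    exact ⟨⟨A, mem_positiveMembers.2 ⟨hA, hXA⟩⟩,
      ⟨B, mem_positiveMembers.2 ⟨hB, fun b hb => by simp [hXB b hb]⟩⟩⟩
  exact card_lt_add_of_forall_ne_neg (w := fun X => (positiveMembers F X).sup c) hP_mono hP_neg
    (fun X Y => altLen_mono) (fun X => altLen_ne_altLen_neg) hshort
    (fun X Y h => sup_mono (positiveMembers_mono h))
    (fun X hX => sup_positiveMembers_ne hproper hX.1 hX.2)
    (fun X hX => sup_positiveMembers_mem_Icc hcolor hX.1) hs

end Coloring

section KneserColoring

variable {n t k : ℕ} {F : Finset (Finset (Fin n))} {c : Finset (Fin n) → ℕ}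

lemma isKneserColoring_two (hF : ∅ ∉ F) :
    IsKneserColoring n 2 t F c ↔
      (∀ A ∈ F, c A ∈ Icc 1 t) ∧ ∀ A ∈ F, ∀ B ∈ F, Disjoint A B → c A ≠ c B := by
  refine and_congr_right' ⟨fun h A hA B hB hAB hc => ?_, fun h E hEF hE hdisj ⟨i, hi⟩ => ?_⟩
  · have hne : A ≠ B := fun heq => hF (disjoint_self_iff_empty A |>.1 (heq ▸ hAB) ▸ hA)
    refine h {A, B} (by simp [insert_subset_iff, hA, hB]) (card_pair hne) ?_ ⟨c A, by simp [hc]⟩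
    rw [coe_pair]
    exact Set.pairwise_pair_of_symm.2 fun _ => hAB
  · obtain ⟨A, B, hne, rfl⟩ := card_eq_two.1 hE
    simp only [mem_insert, mem_singleton, forall_eq_or_imp, forall_eq, insert_subset_iff,
      singleton_subset_iff] at hi hEF
    exact h A hEF.1 B hEF.2 (hdisj (by simp) (by simp) hne) (hi.1.trans hi.2.symm)

lemma exists_isKneserColoring_of_forall_le_card (hk : 0 < k) (hF : ∀ A ∈ F, k ≤ #A) :
    ∃ c, IsKneserColoring n 2 (n - 2 * k + 2) F c := by
  let first (A : Finset (Fin n)) : ℕ := sInf ((↑) '' (A : Set (Fin n)))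
  have hnonempty {A} (hA : A ∈ F) : A.Nonempty := card_pos.1 (hk.trans_le (hF A hA))
  have first_mem {A} (hA : A ∈ F) : ∃ a ∈ A, a.val = first A :=
    Nat.sInf_mem ((hnonempty hA).to_set.image _)
  have first_le {A} {a : Fin n} (ha : a ∈ A) : first A ≤ a := Nat.sInf_le ⟨a, ha, rfl⟩
  refine ⟨fun A => min (first A + 1) (n - 2 * k + 2),
    (isKneserColoring_two fun h => not_nonempty_empty (hnonempty h)).2
      ⟨fun A _ => mem_Icc.2 (by omega), fun A hA B hB hAB heq => ?_⟩⟩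
  obtain hlt | hge := lt_or_ge (first A) (n - 2 * k + 1)
  · obtain ⟨a, ha, hfirst_a⟩ := first_mem hA
    obtain ⟨b, hb, hfirst_b⟩ := first_mem hB
    have hab : a = b := Fin.ext (by omega)
    exact disjoint_left.1 hAB ha (hab ▸ hb)
  · have hsub : (A ∪ B).map Fin.valEmbedding ⊆ Ico (n - 2 * k + 1) n := by
      intro x hx
      obtain ⟨a, ha, rfl⟩ := mem_map.1 hx
      have hfirst : first A ≤ a ∨ first B ≤ a := (mem_union.1 ha).imp first_le first_le
      have ha_lt := a.isLt
      simp only [Fin.valEmbedding_apply, mem_Ico]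
      omega
    have hcard := card_le_card hsub
    rw [card_map, card_union_of_disjoint hAB, Nat.card_Ico] at hcard
    have hA_card := hF A hA
    have hB_card := hF B hB
    omega

end KneserColoring

/-- Schrijver's theorem: the chromatic number of the Schrijver graph equals `n - 2k + 2`. -/
theorem stmt7 (n k : ℕ) (hk : 1 ≤ k) (hn : 2 * k ≤ n) :
    kneserChrom n 2 (stableSets n 2 k) = n - 2 * k + 2 := by
  have hcard (A) (hA : A ∈ stableSets n 2 k) : #A = k := (mem_stableSets.1 hA).1
  have hupper := exists_isKneserColoring_of_forall_le_card hk fun A hA => (hcard A hA).ge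
  refine le_antisymm (Nat.sInf_le hupper) (le_csInf ⟨_, hupper⟩ fun t ⟨c, hc⟩ => ?_)
  obtain ⟨hcolor, hproper⟩ := (isKneserColoring_two fun h => by simp [← hcard ∅ h] at hk).1 hc
  have hlower : Fintype.card (Fin n) < 2 * k - 1 + t :=
    card_lt_add_of_forall_lt_altLen hcolor hproper
      (fun X hX τ hτ => exists_mem_stableSets_of_two_mul_le_altLen (by omega) hτ)
      (by rw [Fintype.card_fin]; omega)
  rw [Fintype.card_fin] at hlower
  omega
end

section
/- Let k, n, m be positive integers, let π = (P_1,...,P_m) be a partition of [n], and let s = (s_1,...,s_m) be a vector of positive integers with s_i ≤ |P_i| for all i and k ≤ s_1 + ... + s_m. Then χ(KG^2(π; s; k)) = max{1, n − M_{2,π} + 1}. -/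
open Finset

/-- `P` is a partition of `[n]` (identified with `Fin n`) into `m` blocks. -/
def IsPartition (n m : ℕ) (P : Fin m → Finset (Fin n)) : Prop :=
  (∀ i, (P i).Nonempty) ∧ (∀ i j, i ≠ j → Disjoint (P i) (P j)) ∧
    ∀ a : Fin n, ∃ i, a ∈ P i

open Classical in
/-- The vertex set of the multiple Kneser hypergraph `KG^r(π; s; k)`:
all `k`-subsets `A` of `[n]` with `|A ∩ P i| ≤ s i` for all `i`. -/
noncomputable def multiKneserVerts (n m k : ℕ) (P : Fin m → Finset (Fin n))
    (s : Fin m → ℕ) : Finset (Finset (Fin n)) :=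
  Finset.univ.filter fun A => A.card = k ∧ ∀ i, (A ∩ P i).card ≤ s i

/-- `f_{r,π}(P i) = r * s i` if `|P i| ≥ r * s i`, and `|P i|` otherwise. -/
def frpi (n m r : ℕ) (P : Fin m → Finset (Fin n)) (s : Fin m → ℕ) (i : Fin m) : ℕ :=
  if r * s i ≤ (P i).card then r * s i else (P i).card

/-- `M_{r,π}`: the maximum, over all subsets `S ⊆ [m]` with
`∑_{i ∈ S} f_{r,π}(P i) ≤ rk - 1`, of `rk - 1 + ∑_{i ∈ S} (|P i| - f_{r,π}(P i))`. -/
noncomputable def Mrpi (n m r k : ℕ) (P : Fin m → Finset (Fin n)) (s : Fin m → ℕ) : ℕ :=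
  sSup {v | ∃ S : Finset (Fin m), (∑ i ∈ S, frpi n m r P s i) ≤ r * k - 1 ∧
    v = r * k - 1 + ∑ i ∈ S, ((P i).card - frpi n m r P s i)}

/-!
*Lower bound.* Given a proper coloring with `t` colors, label every nonempty signed set, i.e. every
pair `(U, V) ≠ (∅, ∅)` of disjoint sets. If neither part contains a vertex, the level of the label
is the sum of the ranks of the traces of `(U, V)` on the blocks. A block contributes its capped
sizes, unless both parts reach the capacity in it; such blocks form an admissible selection in the
definition of `M`, so that the level stays below `M`. The sign tells which part dominates in the
first block where one of them can dominate. If a part contains a vertex, the level is `M` plus the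
smaller of the two largest colors inside `U` and `V`, which are different since disjoint vertices
have different colors, and the sign tells which one is larger. This is a Tucker labeling with levels
in `{1, ..., M + t - 1}`, hence `n ≤ M + t - 1`. Tucker's lemma follows from Ky Fan's parity count
of alternating chains: deleting an element of a chain is a coboundary modulo two, and the antipodal
symmetry folds the top-dimensional chains onto a hemisphere whose boundary is one dimension lower.

*Upper bound.* Let `T` be a set of `min n M` elements that contains the blocks of a selection
attaining `M`. The selected blocks leave so little room in `T` that no `r` disjoint vertices fit.
Hence every edge has a vertex meeting the complement of `T`, and each vertex can be colored by one
of its elements there, with one further color for the vertices inside `T`.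
-/

section AlternatingSigns

/-- A label `±ℓ`, encoded as its level `ℓ` together with its sign. Labels are compared by level
first. -/
abbrev SignedLabel (ι : Type*) := ι ×ₗ Bool

variable {ι : Type*}

namespace SignedLabel

/-- The absolute value `ℓ` of the label `±ℓ`. -/
def level (x : SignedLabel ι) : ι := (ofLex x).1

/-- The sign of the label `±ℓ`. -/
def sign (x : SignedLabel ι) : Bool := (ofLex x).2

/-- The label `∓ℓ` opposite to `±ℓ`. -/
def neg (x : SignedLabel ι) : SignedLabel ι := toLex (x.level, !x.sign)

@[simp] lemma level_toLex (ℓ : ι) (b : Bool) : level (toLex (ℓ, b)) = ℓ := rfl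

@[simp] lemma neg_toLex (ℓ : ι) (b : Bool) : neg (toLex (ℓ, b)) = toLex (ℓ, !b) := rfl

@[simp] lemma sign_neg (x : SignedLabel ι) : x.neg.sign = !x.sign := rfl

/-- A multiset of labels is complement-free if it does not contain both `ℓ` and `-ℓ`. -/
def ComplementFree (T : Multiset (SignedLabel ι)) : Prop :=
  ∀ x ∈ T, ∀ y ∈ T, x.level = y.level → x = y

lemma complementFree_cons {x : SignedLabel ι} {T : Multiset (SignedLabel ι)} :
    ComplementFree (x ::ₘ T) ↔ (∀ y ∈ T, x.level = y.level → x = y) ∧ ComplementFree T := by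
  simp only [ComplementFree, Multiset.forall_mem_cons, true_implies]
  grind

variable [LinearOrder ι]

lemma neg_le_neg {x y : SignedLabel ι} (hxy : x ≤ y) (h : x.level = y.level → x = y) :
    x.neg ≤ y.neg := by
  rcases eq_or_ne x y with rfl | hne
  · exact le_rfl
  · rcases Prod.Lex.le_iff.1 hxy with hlt | ⟨heq, -⟩
    · exact Prod.Lex.le_iff.2 (Or.inl hlt)
    · exact absurd (h heq) hne

/-- The indicator, modulo two, of the multisets of labels whose signs alternate when the labels
are listed in increasing order, starting with the sign `b`. -/
def altIndicator (b : Bool) (T : Multiset (SignedLabel ι)) : ZMod 2 :=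
  if (T.sort (· ≤ ·)).map sign = List.iterate not b T.card then 1 else 0

lemma altIndicator_zero (b : Bool) : altIndicator b (0 : Multiset (SignedLabel ι)) = 1 := by
  simp [altIndicator]

lemma altIndicator_cons (b : Bool) {x : SignedLabel ι} {T : Multiset (SignedLabel ι)}
    (hx : ∀ y ∈ T, x ≤ y) :
    altIndicator b (x ::ₘ T) = if x.sign = b then altIndicator (!b) T else 0 := by
  simp only [altIndicator, Multiset.sort_cons _ _ _ hx, List.map_cons, Multiset.card_cons,
    List.iterate, List.cons.injEq, ite_and]

end SignedLabel

theorem multiset_induction_on_min {β : Type*} [LinearOrder β] {p : Multiset β → Prop}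
    (zero : p 0) (cons : ∀ x T, (∀ y ∈ T, x ≤ y) → p T → p (x ::ₘ T)) (T : Multiset β) : p T := by
  suffices h : ∀ l : List β, l.Pairwise (· ≤ ·) → p l by
    rw [← T.sort_eq (· ≤ ·)]
    exact h _ (T.pairwise_sort _)
  intro l hl
  induction hl with
  | nil => exact zero
  | cons hx _ ih => exact cons _ _ (by simpa using hx) ih

/-- The simplicial coboundary: the value of `φ` summed over the multisets obtained from `T` by
deleting one element. -/
def deletionSum {β R : Type*} [DecidableEq β] [AddCommMonoid R] (φ : Multiset β → R)
    (T : Multiset β) : R :=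
  (T.map fun x => φ (T.erase x)).sum

lemma deletionSum_cons {β R : Type*} [DecidableEq β] [AddCommMonoid R] (φ : Multiset β → R)
    (x : β) (T : Multiset β) :
    deletionSum φ (x ::ₘ T) = φ T + deletionSum (fun S => φ (x ::ₘ S)) T := by
  unfold deletionSum
  rw [Multiset.map_cons, Multiset.sum_cons, Multiset.erase_cons_head]
  congr 2
  refine Multiset.map_congr rfl fun y hy => ?_
  rw [Multiset.erase_cons_tail_of_mem hy]

namespace SignedLabel

variable [LinearOrder ι]

/-- Deleting an interior element of a sequence creates two equal adjacent signs, and deleting the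
first or the last element preserves alternation. -/
lemma deletionSum_altIndicator (b : Bool) (T : Multiset (SignedLabel ι)) :
    deletionSum (altIndicator b) T = altIndicator b T + altIndicator (!b) T := by
  induction T using multiset_induction_on_min generalizing b with
  | zero => simp [deletionSum, altIndicator_zero, CharTwo.add_self_eq_zero]
  | cons x T hx ih =>
    have hcons : deletionSum (fun S => altIndicator b (x ::ₘ S)) T =
        if x.sign = b then deletionSum (altIndicator (!b)) T else 0 := by
      have (y : _) : altIndicator b (x ::ₘ T.erase y) =
          if x.sign = b then altIndicator (!b) (T.erase y) else 0 :=
        altIndicator_cons b fun z hz => hx z (Multiset.mem_of_mem_erase hz)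
      simp only [deletionSum, this]
      split_ifs <;> simp
    rw [deletionSum_cons, hcons, altIndicator_cons b hx, altIndicator_cons (!b) hx, ih,
      Bool.not_not]
    by_cases hb : x.sign = b
    · rw [if_pos hb, if_pos hb, if_neg (by simp [hb]), add_comm (altIndicator (!b) T),
        CharTwo.add_cancel_left, add_zero]
    · rw [if_neg hb, if_neg hb, if_pos (Bool.eq_not.2 hb), add_zero, zero_add]

lemma altIndicator_map_neg (b : Bool) {T : Multiset (SignedLabel ι)} (hT : ComplementFree T) :
    altIndicator b (T.map neg) = altIndicator (!b) T := by
  induction T using multiset_induction_on_min generalizing b with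
  | zero => simp only [Multiset.map_zero, altIndicator_zero]
  | cons x T hx ih =>
    obtain ⟨hxT, hT⟩ := complementFree_cons.1 hT
    have hneg : ∀ y ∈ T.map neg, x.neg ≤ y := by
      simpa only [Multiset.forall_mem_map_iff] using
        fun y hy => neg_le_neg (hx y hy) (hxT y hy)
    rw [Multiset.map_cons, altIndicator_cons b hneg, altIndicator_cons (!b) hx, ih _ hT, sign_neg]
    simp only [Bool.not_eq_eq_eq_not]

lemma nodup_map_level_of_altIndicator_ne_zero {b : Bool} {T : Multiset (SignedLabel ι)}
    (hT : ComplementFree T) (h : altIndicator b T ≠ 0) : (T.map level).Nodup := by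
  induction T using multiset_induction_on_min generalizing b with
  | zero => simp
  | cons x T hx ih =>
    obtain ⟨hxT, hT⟩ := complementFree_cons.1 hT
    rw [altIndicator_cons b hx] at h
    obtain ⟨hb, hne⟩ := ite_ne_right_iff.1 h
    rw [Multiset.map_cons, Multiset.nodup_cons]
    refine ⟨fun hmem => ?_, ih hT hne⟩
    obtain ⟨y, hy, hyx⟩ := Multiset.mem_map.1 hmem
    obtain rfl := hxT y hy hyx.symm
    rw [← Multiset.cons_erase hy,
      altIndicator_cons _ fun z hz => hx z (Multiset.mem_of_mem_erase hz)] at hne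
    exact (Bool.eq_not_self b).1 (hb.symm.trans (ite_ne_right_iff.1 hne).1)

lemma card_le_of_altIndicator_ne_zero {b : Bool} {T : Multiset (SignedLabel ι)} {s : Finset ι}
    (hT : ComplementFree T) (hs : ∀ x ∈ T, x.level ∈ s) (h : altIndicator b T ≠ 0) :
    T.card ≤ s.card := by
  have hnodup := nodup_map_level_of_altIndicator_ne_zero hT h
  rw [← Multiset.card_map level, ← Multiset.toFinset_card_of_nodup hnodup]
  exact card_le_card fun ℓ hℓ => by
    obtain ⟨x, hx, rfl⟩ := Multiset.mem_map.1 (Multiset.mem_toFinset.1 hℓ)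
    exact hs x hx

end SignedLabel

end AlternatingSigns

section Tucker

variable {α β ι : Type*} [DecidableEq α]

/-- The label multisets of the chains `(U₁, V₁) < ⋯ < (U_d, V_d) = (U, V)` of signed sets, each of
which arises from the next one by deleting one element. -/
def chainLabels (lab : Finset α → Finset α → β) :
    ℕ → Finset α → Finset α → Multiset (Multiset β)
  | 0, _, _ => {0}
  | d + 1, U, V => (U ∪ V).val.bind fun a =>
      (chainLabels lab d (U.erase a) (V.erase a)).map (lab U V ::ₘ ·)

/-- The sum of a function of label multisets over the chains of `chainLabels`. -/
def chainSum {R : Type*} [AddCommMonoid R] (lab : Finset α → Finset α → β) (d : ℕ)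
    (φ : Multiset β → R) (U V : Finset α) : R :=
  ((chainLabels lab d U V).map φ).sum

section ChainSum

variable {R : Type*} (lab : Finset α → Finset α → β)

lemma mem_chainLabels_succ {d : ℕ} {U V : Finset α} {T : Multiset β} :
    T ∈ chainLabels lab (d + 1) U V ↔
      ∃ a ∈ U ∪ V, ∃ S ∈ chainLabels lab d (U.erase a) (V.erase a), lab U V ::ₘ S = T := by
  simp only [chainLabels, Multiset.mem_bind, Multiset.mem_map, mem_val]

lemma card_of_mem_chainLabels {d : ℕ} {U V : Finset α} {T : Multiset β}
    (hT : T ∈ chainLabels lab d U V) : T.card = d := by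
  induction d generalizing U V T with
  | zero => rw [Multiset.mem_singleton.1 hT, Multiset.card_zero]
  | succ d ih =>
    obtain ⟨a, -, S, hS, rfl⟩ := (mem_chainLabels_succ lab).1 hT
    rw [Multiset.card_cons, ih hS]

lemma exists_eq_of_mem_chainLabels {d : ℕ} {U V : Finset α} {T : Multiset β}
    (hT : T ∈ chainLabels lab d U V) {x : β} (hx : x ∈ T) :
    ∃ U' ⊆ U, ∃ V' ⊆ V, (U' ∪ V').Nonempty ∧ lab U' V' = x := by
  induction d generalizing U V T with
  | zero => simp [Multiset.mem_singleton.1 hT] at hx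
  | succ d ih =>
    obtain ⟨a, ha, S, hS, rfl⟩ := (mem_chainLabels_succ lab).1 hT
    rcases Multiset.mem_cons.1 hx with rfl | hxS
    · exact ⟨U, Subset.rfl, V, Subset.rfl, ⟨a, ha⟩, rfl⟩
    · obtain ⟨U', hU, V', hV, h⟩ := ih hS hxS
      exact ⟨U', hU.trans (erase_subset a U), V', hV.trans (erase_subset a V), h⟩

lemma chainSum_succ [AddCommMonoid R] (d : ℕ) (φ : Multiset β → R) (U V : Finset α) :
    chainSum lab (d + 1) φ U V =
      ∑ a ∈ U ∪ V, chainSum lab d (fun T => φ (lab U V ::ₘ T)) (U.erase a) (V.erase a) := by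
  simp only [chainSum, chainLabels, Multiset.map_bind, Multiset.sum_bind, Multiset.map_map,
    Function.comp_def, Finset.sum]

lemma chainSum_add [AddCommMonoid R] (d : ℕ) (φ ψ : Multiset β → R) (U V : Finset α) :
    chainSum lab d (fun T => φ T + ψ T) U V = chainSum lab d φ U V + chainSum lab d ψ U V :=
  Multiset.sum_map_add

lemma sum_sum_erase_eq_zero_s10 [Semiring R] [CharP R 2] (A : Finset α) (g : α → α → R)
    (hg : ∀ a b, g a b = g b a) : ∑ a ∈ A, ∑ b ∈ A.erase a, g a b = 0 := by
  rw [sum_sigma']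
  refine sum_involution (fun p _ => ⟨p.2, p.1⟩) ?_ ?_ ?_ fun _ _ => rfl
  · rintro ⟨a, b⟩ -
    rw [hg a b]
    exact CharTwo.add_self_eq_zero _
  · rintro ⟨a, b⟩ h - heq
    simp only [mem_sigma, mem_erase] at h
    exact h.2.1 (congrArg Sigma.fst heq)
  · rintro ⟨a, b⟩ h
    simp only [mem_sigma, mem_erase] at h ⊢
    exact ⟨h.2.2, h.2.1.symm, h.1⟩

/-- Modulo two, only the deletion of the top label survives: a chain with an interior gap can be
filled in exactly two ways. -/
lemma chainSum_deletionSum [DecidableEq β] [Semiring R] [CharP R 2] (d : ℕ) (φ : Multiset β → R)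
    (U V : Finset α) :
    chainSum lab (d + 1) (deletionSum φ) U V =
      ∑ a ∈ U ∪ V, chainSum lab d φ (U.erase a) (V.erase a) := by
  induction d generalizing φ U V with
  | zero =>
    rw [chainSum_succ]
    simp [chainSum, chainLabels, deletionSum]
  | succ d ih =>
    have hgap : ∑ a ∈ U ∪ V, chainSum lab (d + 1) (deletionSum fun T => φ (lab U V ::ₘ T))
        (U.erase a) (V.erase a) = 0 := by
      simp only [ih, ← erase_union_distrib]
      refine sum_sum_erase_eq_zero_s10 (U ∪ V) (fun a b => chainSum lab d
        (fun T => φ (lab U V ::ₘ T)) ((U.erase a).erase b) ((V.erase a).erase b)) fun a b => ?_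
      simp only [erase_right_comm]
    rw [chainSum_succ]
    simp only [deletionSum_cons, chainSum_add, sum_add_distrib]
    rw [hgap, add_zero]

lemma sum_powerset_eq_zero [Semiring R] [CharP R 2] {A : Finset α} {a : α} (ha : a ∈ A)
    (g : Finset α → R) (hg : ∀ B, g (insert a B) = g (B.erase a)) : ∑ B ∈ A.powerset, g B = 0 := by
  rw [← insert_erase ha, sum_powerset_insert (notMem_erase a A), ← sum_add_distrib]
  refine sum_eq_zero fun B hB => ?_
  have haB : a ∉ B := fun h => notMem_erase a A (mem_powerset.1 hB h)
  rw [hg, erase_eq_of_notMem haB]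
  exact CharTwo.add_self_eq_zero _

end ChainSum

/-- The hypothesis of Tucker's lemma: a labeling of the nonempty signed sets, i.e. of the pairs
`(U, V) ≠ (∅, ∅)` of disjoint sets, that is antipodal and assigns opposite labels to no two
comparable signed sets. -/
structure IsTuckerLabeling (lab : Finset α → Finset α → SignedLabel ι) : Prop where
  swap : ∀ ⦃U V⦄, Disjoint U V → (U ∪ V).Nonempty → lab V U = (lab U V).neg
  eq_of_level_eq : ∀ ⦃U V U' V'⦄, U ⊆ U' → V ⊆ V' → Disjoint U' V' → (U ∪ V).Nonempty →
    (lab U V).level = (lab U' V').level → lab U V = lab U' V'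

namespace IsTuckerLabeling

variable {lab : Finset α → Finset α → SignedLabel ι}

lemma chainLabels_swap (hlab : IsTuckerLabeling lab) (d : ℕ) {U V : Finset α}
    (hUV : Disjoint U V) :
    chainLabels lab d V U = (chainLabels lab d U V).map (Multiset.map SignedLabel.neg) := by
  induction d generalizing U V with
  | zero => simp [chainLabels]
  | succ d ih =>
    simp only [chainLabels, Multiset.map_bind, Multiset.map_map, union_comm V U]
    refine Multiset.bind_congr fun a ha => ?_
    rw [ih (hUV.mono (erase_subset a U) (erase_subset a V)), Multiset.map_map]
    simp only [Function.comp_def, Multiset.map_cons, hlab.swap hUV ⟨a, ha⟩]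

lemma complementFree_of_mem_chainLabels (hlab : IsTuckerLabeling lab) {d : ℕ} {U V : Finset α}
    (hUV : Disjoint U V) {T : Multiset (SignedLabel ι)} (hT : T ∈ chainLabels lab d U V) :
    SignedLabel.ComplementFree T := by
  induction d generalizing U V T with
  | zero => simp [Multiset.mem_singleton.1 hT, SignedLabel.ComplementFree]
  | succ d ih =>
    obtain ⟨a, -, S, hS, rfl⟩ := (mem_chainLabels_succ lab).1 hT
    refine SignedLabel.complementFree_cons.2
      ⟨fun x hx hlevel => ?_, ih (hUV.mono (erase_subset a U) (erase_subset a V)) hS⟩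
    obtain ⟨U', hU, V', hV, hne, rfl⟩ := exists_eq_of_mem_chainLabels lab hS hx
    exact (hlab.eq_of_level_eq (hU.trans (erase_subset a U)) (hV.trans (erase_subset a V)) hUV hne
      hlevel.symm).symm

variable [LinearOrder ι]

lemma chainSum_altIndicator_swap (hlab : IsTuckerLabeling lab) (d : ℕ) (b : Bool)
    {U V : Finset α} (hUV : Disjoint U V) :
    chainSum lab d (SignedLabel.altIndicator b) V U =
      chainSum lab d (SignedLabel.altIndicator (!b)) U V := by
  rw [chainSum, hlab.chainLabels_swap d hUV, Multiset.map_map, chainSum]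
  refine congrArg Multiset.sum (Multiset.map_congr rfl fun T hT => ?_)
  exact SignedLabel.altIndicator_map_neg b (hlab.complementFree_of_mem_chainLabels hUV hT)

/-- The chains whose top has support `insert d A` are folded, by antipodality, onto the hemisphere
where `d` is positive; there the two signs add up to the deletion sum. -/
lemma sum_chainSum_insert (hlab : IsTuckerLabeling lab) {A : Finset α} {d : α} (hd : d ∉ A)
    (e : ℕ) (b : Bool) :
    ∑ B ∈ (insert d A).powerset,
        chainSum lab e (SignedLabel.altIndicator b) B (insert d A \ B) =
      ∑ B ∈ A.powerset,
        chainSum lab e (deletionSum (SignedLabel.altIndicator b)) (insert d B) (A \ B) := by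
  have hpos : ∀ B, insert d A \ insert d B = A \ B := fun B => by
    rw [insert_sdiff_insert, sdiff_insert_of_notMem hd]
  have hneg : ∑ B ∈ A.powerset, chainSum lab e (SignedLabel.altIndicator b) B (insert d A \ B) =
      ∑ B ∈ A.powerset, chainSum lab e (SignedLabel.altIndicator (!b)) (insert d B) (A \ B) := by
    refine sum_nbij' (A \ ·) (A \ ·) (by simp) (by simp) ?_ ?_ fun B hB => ?_
    · exact fun B hB => Finset.sdiff_sdiff_eq_self (mem_powerset.1 hB)
    · exact fun B hB => Finset.sdiff_sdiff_eq_self (mem_powerset.1 hB)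
    · have hdB : d ∉ B := fun h => hd (mem_powerset.1 hB h)
      rw [← hlab.chainSum_altIndicator_swap, Finset.sdiff_sdiff_eq_self (mem_powerset.1 hB),
        insert_sdiff_of_notMem _ hdB]
      rw [Finset.sdiff_sdiff_eq_self (mem_powerset.1 hB), disjoint_insert_left]
      exact ⟨hdB, sdiff_disjoint⟩
  rw [sum_powerset_insert hd, hneg, ← sum_add_distrib]
  refine sum_congr rfl fun B _ => ?_
  rw [hpos, add_comm, ← chainSum_add]
  simp only [← SignedLabel.deletionSum_altIndicator]

/-- A form of Ky Fan's lemma. -/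
theorem sum_chainSum_altIndicator (hlab : IsTuckerLabeling lab) (A : Finset α) (b : Bool) :
    ∑ B ∈ A.powerset, chainSum lab A.card (SignedLabel.altIndicator b) B (A \ B) = 1 := by
  induction A using Finset.induction_on with
  | empty => simp [chainSum, chainLabels, SignedLabel.altIndicator_zero]
  | insert d A hd ih =>
    have hboundary : ∀ B ∈ A.powerset,
        chainSum lab (A.card + 1) (deletionSum (SignedLabel.altIndicator b)) (insert d B) (A \ B) =
          chainSum lab A.card (SignedLabel.altIndicator b) B (A \ B) +
          ∑ a ∈ A, chainSum lab A.card (SignedLabel.altIndicator b) (insert d (B.erase a))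
            ((A \ B).erase a) := fun B hB => by
      have hB := mem_powerset.1 hB
      rw [chainSum_deletionSum, insert_union, union_sdiff_of_subset hB, sum_insert hd,
        erase_insert fun h => hd (hB h), erase_eq_of_notMem fun h => hd (mem_sdiff.1 h).1]
      refine congrArg _ (sum_congr rfl fun a ha => ?_)
      rw [erase_insert_of_ne (ne_of_mem_of_not_mem ha hd).symm]
    rw [hlab.sum_chainSum_insert hd, card_insert_of_notMem hd, sum_congr rfl hboundary,
      sum_add_distrib, ih, add_eq_left, sum_comm]
    refine sum_eq_zero fun a ha => sum_powerset_eq_zero ha _ fun B => ?_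
    rw [erase_insert_eq_erase, erase_idem,
      show (A \ insert a B).erase a = (A \ B.erase a).erase a by grind]

/-- The octahedral Tucker lemma. -/
theorem card_le [Fintype α] (hlab : IsTuckerLabeling lab) {s : Finset ι}
    (hs : ∀ U V, Disjoint U V → (U ∪ V).Nonempty → (lab U V).level ∈ s) :
    Fintype.card α ≤ s.card := by
  obtain ⟨B, -, hB⟩ := exists_ne_zero_of_sum_ne_zero
    ((hlab.sum_chainSum_altIndicator univ true).trans_ne one_ne_zero)
  obtain ⟨T, hT, halt⟩ : ∃ T ∈ chainLabels lab (univ : Finset α).card B (univ \ B),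
      SignedLabel.altIndicator true T ≠ 0 := by
    contrapose! hB
    exact Multiset.sum_eq_zero (by simpa only [Multiset.forall_mem_map_iff] using hB)
  have hdisj : Disjoint B (univ \ B) := disjoint_sdiff
  rw [← Finset.card_univ, ← card_of_mem_chainLabels lab hT]
  refine SignedLabel.card_le_of_altIndicator_ne_zero
    (hlab.complementFree_of_mem_chainLabels hdisj hT) (fun x hx => ?_) halt
  obtain ⟨U, hU, V, hV, hUV, rfl⟩ := exists_eq_of_mem_chainLabels lab hT hx
  exact hs U V (hdisj.mono hU hV) hUV

end IsTuckerLabeling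

end Tucker

section Glue

variable {α : Type*}

/-- The labeling of signed sets that agrees with `lab` where `K` vanishes on both parts, and
otherwise compares the values of `K` on the two parts, on levels from `M` upwards. -/
def glueLabeling (lab : Finset α → Finset α → SignedLabel ℕ) (M : ℕ) (K : Finset α → ℕ)
    (U V : Finset α) : SignedLabel ℕ :=
  if K U = 0 ∧ K V = 0 then lab U V else toLex (M + min (K U) (K V), decide (K V < K U))

lemma glueLabeling_of_eq_zero (lab : Finset α → Finset α → SignedLabel ℕ) (M : ℕ)
    {K : Finset α → ℕ} {U V : Finset α} (h : K U = 0 ∧ K V = 0) :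
    glueLabeling lab M K U V = lab U V :=
  if_pos h

lemma glueLabeling_of_ne_zero (lab : Finset α → Finset α → SignedLabel ℕ) (M : ℕ)
    {K : Finset α → ℕ} {U V : Finset α} (h : ¬ (K U = 0 ∧ K V = 0)) :
    glueLabeling lab M K U V = toLex (M + min (K U) (K V), decide (K V < K U)) :=
  if_neg h

namespace IsTuckerLabeling

variable [DecidableEq α] {lab : Finset α → Finset α → SignedLabel ℕ} {M : ℕ} {K : Finset α → ℕ}

lemma glue (hlab : IsTuckerLabeling lab) (hK : Monotone K)
    (hK₀ : ∀ U V, Disjoint U V → K U = K V → K U = 0)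
    (hM : ∀ U V, Disjoint U V → K U = 0 → K V = 0 → (lab U V).level < M) :
    IsTuckerLabeling (glueLabeling lab M K) where
  swap U V hUV hne := by
    by_cases h : K U = 0 ∧ K V = 0
    · rw [glueLabeling_of_eq_zero _ _ h, glueLabeling_of_eq_zero _ _ h.symm, hlab.swap hUV hne]
    · rw [glueLabeling_of_ne_zero _ _ h, glueLabeling_of_ne_zero _ _ (mt And.symm h),
        SignedLabel.neg_toLex, min_comm (K V)]
      have hlt : K U < K V ↔ ¬ K V < K U := by have := hK₀ U V hUV; omega
      simp only [hlt, decide_not]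
  eq_of_level_eq U V U' V' hU hV hUV' hne hlevel := by
    have hKU := hK hU
    have hKV := hK hV
    have hUV := hUV'.mono hU hV
    by_cases h' : K U' = 0 ∧ K V' = 0
    · have h : K U = 0 ∧ K V = 0 := by omega
      rw [glueLabeling_of_eq_zero _ _ h, glueLabeling_of_eq_zero _ _ h'] at hlevel ⊢
      exact hlab.eq_of_level_eq hU hV hUV' hne hlevel
    rw [glueLabeling_of_ne_zero _ _ h'] at hlevel ⊢
    by_cases h : K U = 0 ∧ K V = 0
    · rw [glueLabeling_of_eq_zero _ _ h, SignedLabel.level_toLex] at hlevel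
      have := hM U V hUV h.1 h.2
      omega
    · rw [glueLabeling_of_ne_zero _ _ h] at hlevel ⊢
      simp only [SignedLabel.level_toLex] at hlevel
      have hlt : K V < K U ↔ K V' < K U' := by
        have := hK₀ U V hUV
        have := hK₀ U' V' hUV'
        omega
      simp only [hlevel, hlt]

theorem card_lt_add [Fintype α] (hlab : IsTuckerLabeling lab) (hK : Monotone K)
    (hK₀ : ∀ U V, Disjoint U V → K U = K V → K U = 0)
    (hM : ∀ U V, Disjoint U V → K U = 0 → K V = 0 → (lab U V).level < M)
    (hpos : ∀ U V, (U ∪ V).Nonempty → 0 < (lab U V).level)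
    {t : ℕ} (ht : ∀ U, K U ≤ t) : Fintype.card α < M + t := by
  have hM₀ : 0 < M := by
    have h₀ : K ∅ = 0 := hK₀ ∅ ∅ (disjoint_empty_left ∅) rfl
    exact pos_of_gt (hM ∅ ∅ (disjoint_empty_left ∅) h₀ h₀)
  have hle : Fintype.card α ≤ (Ioo 0 (M + t)).card := by
    refine (hlab.glue hK hK₀ hM).card_le fun U V hUV hne => mem_Ioo.2 ?_
    by_cases h : K U = 0 ∧ K V = 0
    · rw [glueLabeling_of_eq_zero _ _ h]
      exact ⟨hpos U V hne, (hM U V hUV h.1 h.2).trans_le (Nat.le_add_right M t)⟩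
    · rw [glueLabeling_of_ne_zero _ _ h, SignedLabel.level_toLex]
      have := hK₀ U V hUV
      have := ht U
      have := ht V
      omega
  rw [Nat.card_Ioo] at hle
  omega

end IsTuckerLabeling

end Glue

section Block

variable {β : Type*}

/-- The contribution to the rank of a signed set of its part `(a, b)` in a block of capacity `s`:
sizes count up to `s` only, unless both `a` and `b` have reached `s`. -/
def blockRank (s : ℕ) (a b : Finset β) : ℕ :=
  if s ≤ #a ∧ s ≤ #b then #a + #b else min #a s + min #b s

lemma blockRank_comm (s : ℕ) (a b : Finset β) : blockRank s b a = blockRank s a b := by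
  unfold blockRank
  split_ifs <;> omega

lemma blockRank_mono (s : ℕ) {a a' b b' : Finset β} (ha : a ⊆ a') (hb : b ⊆ b') :
    blockRank s a b ≤ blockRank s a' b' := by
  have := card_le_card ha
  have := card_le_card hb
  unfold blockRank
  split_ifs <;> omega

lemma blockRank_pos (s : ℕ) [DecidableEq β] {a b : Finset β} (h : (a ∪ b).Nonempty) :
    0 < blockRank s a b := by
  have := card_union_le a b
  have := card_pos.2 h
  unfold blockRank
  split_ifs <;> omega

variable [LinearOrder β]

lemma min_ne_min_of_disjoint {a b : Finset β} (hab : Disjoint a b) (h : (a ∪ b).Nonempty) :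
    a.min ≠ b.min := by
  intro heq
  rcases a.eq_empty_or_nonempty with rfl | ha
  · rw [min_empty, eq_comm, Finset.min_eq_top] at heq
    simp [heq] at h
  · obtain ⟨x, hx⟩ := min_of_nonempty ha
    exact disjoint_left.1 hab (mem_of_min hx) (mem_of_min (heq ▸ hx))

/-- `a` dominates `b` in a block of capacity `s` if only `a` has reached `s`, with ties broken by
the least element. -/
def Dominates (s : ℕ) (a b : Finset β) : Prop :=
  (#b < s ∧ s ≤ #a) ∨ ((s ≤ #a ↔ s ≤ #b) ∧ a.min < b.min)

lemma Dominates.asymm {s : ℕ} {a b : Finset β} (h : Dominates s a b) : ¬ Dominates s b a := by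
  rintro (h' | h') <;> rcases h with h | h
  · omega
  · omega
  · omega
  · exact lt_asymm h.2 h'.2

lemma dominates_or_dominates (s : ℕ) {a b : Finset β} (hab : Disjoint a b)
    (h : (a ∪ b).Nonempty) : Dominates s a b ∨ Dominates s b a := by
  have := (min_ne_min_of_disjoint hab h).lt_or_gt
  unfold Dominates
  grind

lemma dominates_congr {s : ℕ} {a a' b b' : Finset β} (ha : a ⊆ a') (hb : b ⊆ b')
    (h : blockRank s a b = blockRank s a' b') : Dominates s a b ↔ Dominates s a' b' := by
  have := card_le_card ha
  have := card_le_card hb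
  have hcases : (a = a' ∧ b = b') ∨ (#b' < s ∧ s ≤ #a) ∨ (#a' < s ∧ s ≤ #b) := by
    have ha' : #a' ≤ #a → a = a' := eq_of_subset_of_card_le ha
    have hb' : #b' ≤ #b → b = b' := eq_of_subset_of_card_le hb
    unfold blockRank at h
    grind
  rcases hcases with ⟨rfl, rfl⟩ | h | h
  · rfl
  all_goals
    unfold Dominates
    omega

end Block

section BlockLabel

variable {α κ : Type*}

lemma exists_nonempty_inter_union_inter [DecidableEq α] {P : κ → Finset α}
    (hP : ∀ x, ∃ i, x ∈ P i) {U V : Finset α}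
    (h : (U ∪ V).Nonempty) : ∃ i, (U ∩ P i ∪ V ∩ P i).Nonempty := by
  obtain ⟨x, hx⟩ := h
  obtain ⟨i, hi⟩ := hP x
  exact ⟨i, x, by rw [← union_inter_distrib_right]; exact mem_inter.2 ⟨hx, hi⟩⟩

variable [LinearOrder α] [Fintype κ] [LinearOrder κ] (P : κ → Finset α) (s : κ → ℕ)

open Classical in
/-- The blocks `P i` in which `U` dominates `V` with respect to the capacity `s i`. -/
noncomputable def dominatedBlocks (U V : Finset α) : Finset κ :=
  {i | Dominates (s i) (U ∩ P i) (V ∩ P i)}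

/-- The Tucker labeling of signed sets whose level is the sum of the block ranks and whose sign
tells which of the two sets dominates the other in the least possible block. -/
noncomputable def blockLabel (U V : Finset α) : SignedLabel ℕ :=
  toLex (∑ i, blockRank (s i) (U ∩ P i) (V ∩ P i),
    decide ((dominatedBlocks P s U V).min < (dominatedBlocks P s V U).min))

variable {P}

lemma level_blockLabel_pos (hP : ∀ x, ∃ i, x ∈ P i) {U V : Finset α} (h : (U ∪ V).Nonempty) :
    0 < (blockLabel P s U V).level := by
  obtain ⟨i, hi⟩ := exists_nonempty_inter_union_inter hP h
  exact sum_pos' (fun _ _ => Nat.zero_le _) ⟨i, mem_univ i, blockRank_pos (s i) hi⟩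

lemma min_dominatedBlocks_ne (hP : ∀ x, ∃ i, x ∈ P i) {U V : Finset α} (hUV : Disjoint U V)
    (h : (U ∪ V).Nonempty) : (dominatedBlocks P s U V).min ≠ (dominatedBlocks P s V U).min := by
  classical
  refine min_ne_min_of_disjoint (disjoint_filter.2 fun i _ => Dominates.asymm) ?_
  obtain ⟨i, hi⟩ := exists_nonempty_inter_union_inter hP h
  refine ⟨i, ?_⟩
  simpa [dominatedBlocks] using
    dominates_or_dominates (s i) (hUV.mono inter_subset_left inter_subset_left) hi

theorem isTuckerLabeling_blockLabel (hP : ∀ x, ∃ i, x ∈ P i) :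
    IsTuckerLabeling (blockLabel P s) where
  swap U V hUV hne := by
    have hlt : (dominatedBlocks P s V U).min < (dominatedBlocks P s U V).min ↔
        ¬ (dominatedBlocks P s U V).min < (dominatedBlocks P s V U).min :=
      ⟨lt_asymm, fun h => (min_dominatedBlocks_ne s hP hUV hne).lt_or_gt.resolve_left h⟩
    simp only [blockLabel, SignedLabel.neg_toLex, blockRank_comm, hlt, decide_not]
  eq_of_level_eq U V U' V' hU hV _ _ hlevel := by
    classical
    have hU' (i : κ) : U ∩ P i ⊆ U' ∩ P i := inter_subset_inter_right hU
    have hV' (i : κ) : V ∩ P i ⊆ V' ∩ P i := inter_subset_inter_right hV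
    have hrank : ∀ i ∈ univ, blockRank (s i) (U ∩ P i) (V ∩ P i) =
        blockRank (s i) (U' ∩ P i) (V' ∩ P i) :=
      (sum_eq_sum_iff_of_le fun i _ => blockRank_mono (s i) (hU' i) (hV' i)).1 hlevel
    have hpos : dominatedBlocks P s U V = dominatedBlocks P s U' V' :=
      filter_congr fun i hi => dominates_congr (hU' i) (hV' i) (hrank i hi)
    have hneg : dominatedBlocks P s V U = dominatedBlocks P s V' U' :=
      filter_congr fun i hi => dominates_congr (hV' i) (hU' i) <| by
        rw [blockRank_comm, hrank i hi, blockRank_comm]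
    simp only [blockLabel, sum_congr rfl hrank, hpos, hneg]

end BlockLabel

section MaximalBlocks

variable {n m r k : ℕ} {P : Fin m → Finset (Fin n)} {s : Fin m → ℕ}

lemma frpi_eq_min (i : Fin m) : frpi n m r P s i = min (r * s i) #(P i) := by
  unfold frpi
  split_ifs <;> omega

lemma frpi_le_card (i : Fin m) : frpi n m r P s i ≤ #(P i) :=
  (frpi_eq_min i).trans_le (min_le_right _ _)

lemma bddAbove_Mrpi : BddAbove {v | ∃ S : Finset (Fin m),
    (∑ i ∈ S, frpi n m r P s i) ≤ r * k - 1 ∧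
      v = r * k - 1 + ∑ i ∈ S, (#(P i) - frpi n m r P s i)} := by
  refine ⟨r * k - 1 + ∑ i, (#(P i) - frpi n m r P s i), ?_⟩
  rintro _ ⟨S, -, rfl⟩
  exact Nat.add_le_add_left (sum_le_sum_of_subset (subset_univ S)) _

lemma le_Mrpi {S : Finset (Fin m)} (hS : ∑ i ∈ S, frpi n m r P s i ≤ r * k - 1) :
    r * k - 1 + ∑ i ∈ S, (#(P i) - frpi n m r P s i) ≤ Mrpi n m r k P s :=
  le_csSup bddAbove_Mrpi ⟨S, hS, rfl⟩

variable (n m r k P s) in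
lemma exists_Mrpi_eq : ∃ S : Finset (Fin m), ∑ i ∈ S, frpi n m r P s i ≤ r * k - 1 ∧
    Mrpi n m r k P s = r * k - 1 + ∑ i ∈ S, (#(P i) - frpi n m r P s i) :=
  Nat.sSup_mem (by exact ⟨_, ∅, by simp, rfl⟩) bddAbove_Mrpi

end MaximalBlocks

section LowerBound

variable {n m k t : ℕ} {P : Fin m → Finset (Fin n)} {s : Fin m → ℕ}

lemma mem_multiKneserVerts {A : Finset (Fin n)} :
    A ∈ multiKneserVerts n m k P s ↔ #A = k ∧ ∀ i, #(A ∩ P i) ≤ s i := by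
  classical
  simp [multiKneserVerts]

/-- The size of `U` when at most `s i` elements of each block `P i` are counted. For a partition
`P`, this is the largest size of a subset of `U` respecting the capacities `s`. -/
def cappedCard (P : Fin m → Finset (Fin n)) (s : Fin m → ℕ) (U : Finset (Fin n)) : ℕ :=
  ∑ i, min #(U ∩ P i) (s i)

lemma exists_mem_multiKneserVerts (hP : ∀ i j, i ≠ j → Disjoint (P i) (P j))
    {U : Finset (Fin n)} (hU : k ≤ cappedCard P s U) :
    ∃ A ∈ multiKneserVerts n m k P s, A ⊆ U := by
  choose D hD hDcard using fun i =>
    exists_subset_card_eq (min_le_left #(U ∩ P i) (s i))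
  have hDP (i : Fin m) : D i ⊆ P i := (hD i).trans inter_subset_right
  have hcard : #(univ.biUnion D) = cappedCard P s U := by
    rw [card_biUnion fun i _ j _ hij => (hP i j hij).mono (hDP i) (hDP j)]
    exact sum_congr rfl fun i _ => hDcard i
  obtain ⟨A, hA, hAcard⟩ := exists_subset_card_eq (hU.trans_eq hcard.symm)
  refine ⟨A, mem_multiKneserVerts.2 ⟨hAcard, fun i => ?_⟩, hA.trans ?_⟩
  · have hAD : A ∩ P i ⊆ D i := fun x hx => by
      obtain ⟨hxA, hxi⟩ := mem_inter.1 hx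
      obtain ⟨j, -, hxj⟩ := mem_biUnion.1 (hA hxA)
      rcases eq_or_ne i j with rfl | hij
      · exact hxj
      · exact absurd (hDP j hxj) (disjoint_left.1 (hP i j hij) hxi)
    exact (card_le_card hAD).trans ((hDcard i).trans_le (min_le_right _ _))
  · exact biUnion_subset.2 fun i _ => (hD i).trans inter_subset_left

lemma multiKneserVerts_nonempty (hP : ∀ i j, i ≠ j → Disjoint (P i) (P j))
    (hsP : ∀ i, s i ≤ #(P i)) (hks : k ≤ ∑ i, s i) : (multiKneserVerts n m k P s).Nonempty := by
  have hcap : cappedCard P s univ = ∑ i, s i :=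
    sum_congr rfl fun i _ => by rw [univ_inter, min_eq_right (hsP i)]
  obtain ⟨A, hA, -⟩ := exists_mem_multiKneserVerts hP (hks.trans_eq hcap.symm)
  exact ⟨A, hA⟩

lemma card_inter_add_card_inter_le {α : Type*} [DecidableEq α] {U V : Finset α}
    (hUV : Disjoint U V) (A : Finset α) : #(U ∩ A) + #(V ∩ A) ≤ #A := by
  rw [← card_union_of_disjoint (hUV.mono inter_subset_left inter_subset_left),
    ← union_inter_distrib_right]
  exact card_le_card inter_subset_right

/-- The blocks in which both parts have reached the capacity `s i` form an admissible selection in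
the definition of `Mrpi`. -/
lemma level_blockLabel_lt_Mrpi {U V : Finset (Fin n)} (hUV : Disjoint U V)
    (hU : cappedCard P s U < k) (hV : cappedCard P s V < k) :
    (blockLabel P s U V).level < Mrpi n m 2 k P s := by
  set S : Finset (Fin m) := {i | s i ≤ #(U ∩ P i) ∧ s i ≤ #(V ∩ P i)} with hS
  set capped : Fin m → ℕ := fun i => min #(U ∩ P i) (s i) + min #(V ∩ P i) (s i) with hcapped
  have hblock (i : Fin m) := card_inter_add_card_inter_le hUV (P i)
  have hfrpi : ∀ i ∈ S, frpi n m 2 P s i = capped i := fun i hi => by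
    have := (mem_filter.1 hi).2
    have := hblock i
    simp only [frpi_eq_min, hcapped]
    omega
  have htotal : ∑ i, capped i = cappedCard P s U + cappedCard P s V := sum_add_distrib
  have hadmissible : ∑ i ∈ S, frpi n m 2 P s i ≤ 2 * k - 1 := by
    have : ∑ i ∈ S, frpi n m 2 P s i ≤ ∑ i, capped i :=
      (sum_congr rfl hfrpi).trans_le (sum_le_sum_of_subset (subset_univ S))
    omega
  have hlevel : (blockLabel P s U V).level ≤
      ∑ i, capped i + ∑ i ∈ S, (#(P i) - frpi n m 2 P s i) := by
    rw [hS, sum_filter, ← sum_add_distrib, blockLabel, SignedLabel.level_toLex]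
    refine sum_le_sum fun i _ => ?_
    have := hblock i
    unfold blockRank
    split_ifs with h
    · rw [hfrpi i (mem_filter.2 ⟨mem_univ i, h⟩), hcapped]
      omega
    · exact le_rfl
  have := le_Mrpi hadmissible
  omega

/-- The largest value of `c` on the members of `F` inside `U`, or `0` if there are none. -/
def maxColor {α : Type*} [DecidableEq α] (F : Finset (Finset α)) (c : Finset α → ℕ)
    (U : Finset α) : ℕ :=
  ({A ∈ F | A ⊆ U} : Finset (Finset α)).sup c

section MaxColor

variable {α : Type*} [DecidableEq α] {F : Finset (Finset α)} {c : Finset α → ℕ} {U : Finset α}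

variable (F c) in
lemma maxColor_mono : Monotone (maxColor F c) := fun _ _ hUV =>
  sup_mono (monotone_filter_right F fun _ _ hA => hA.trans hUV)

lemma le_maxColor {A : Finset α} (hA : A ∈ F) (hAU : A ⊆ U) : c A ≤ maxColor F c U :=
  le_sup (mem_filter.2 ⟨hA, hAU⟩)

lemma exists_eq_maxColor (h : maxColor F c U ≠ 0) : ∃ A ∈ F, A ⊆ U ∧ c A = maxColor F c U := by
  have hne : ({A ∈ F | A ⊆ U} : Finset (Finset α)).Nonempty := by
    rw [nonempty_iff_ne_empty]
    intro hempty
    exact h (by rw [maxColor, hempty, sup_empty, bot_eq_zero])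
  obtain ⟨A, hA, hcA⟩ := exists_mem_eq_sup _ hne c
  obtain ⟨hAF, hAU⟩ := mem_filter.1 hA
  exact ⟨A, hAF, hAU, hcA.symm⟩

end MaxColor

namespace IsKneserColoring

variable {F : Finset (Finset (Fin n))} {c : Finset (Fin n) → ℕ}

lemma maxColor_le {r : ℕ} (hc : IsKneserColoring n r t F c) (U : Finset (Fin n)) :
    maxColor F c U ≤ t :=
  Finset.sup_le fun A hA => (mem_Icc.1 (hc.1 A (mem_filter.1 hA).1)).2

lemma ne_of_disjoint (hc : IsKneserColoring n 2 t F c) {A B : Finset (Fin n)} (hA : A ∈ F)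
    (hB : B ∈ F) (hne : A ≠ B) (hAB : Disjoint A B) : c A ≠ c B := by
  intro hcol
  refine hc.2 {A, B} (by simp [insert_subset_iff, hA, hB]) (card_pair hne) ?_ ⟨c B, by simp [hcol]⟩
  rw [coe_pair, Set.pairwise_pair_of_symm]
  exact fun _ => hAB

lemma maxColor_eq_zero (hc : IsKneserColoring n 2 t F c) (hF : ∅ ∉ F) {U V : Finset (Fin n)}
    (hUV : Disjoint U V) (h : maxColor F c U = maxColor F c V) : maxColor F c U = 0 := by
  by_contra hU
  obtain ⟨A, hA, hAU, hcA⟩ := exists_eq_maxColor hU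
  obtain ⟨B, hB, hBV, hcB⟩ := exists_eq_maxColor (h ▸ hU)
  have hAB : Disjoint A B := hUV.mono hAU hBV
  have hne : A ≠ B := by
    rintro rfl
    exact hF ((disjoint_self_iff_empty A).1 hAB ▸ hA)
  exact hc.ne_of_disjoint hA hB hne hAB (hcA.trans (h.trans hcB.symm))

lemma cappedCard_lt (hP : ∀ i j, i ≠ j → Disjoint (P i) (P j)) {r : ℕ}
    (hc : IsKneserColoring n r t (multiKneserVerts n m k P s) c) {U : Finset (Fin n)}
    (hU : maxColor (multiKneserVerts n m k P s) c U = 0) : cappedCard P s U < k := by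
  by_contra! hk
  obtain ⟨A, hA, hAU⟩ := exists_mem_multiKneserVerts hP hk
  have := (mem_Icc.1 (hc.1 A hA)).1
  have := le_maxColor (c := c) hA hAU
  omega

theorem lt_Mrpi_add (hk : 1 ≤ k) (hP : IsPartition n m P)
    (hc : IsKneserColoring n 2 t (multiKneserVerts n m k P s) c) :
    n < Mrpi n m 2 k P s + t := by
  have hempty : ∅ ∉ multiKneserVerts n m k P s := fun h => by
    have := (mem_multiKneserVerts.1 h).1
    rw [card_empty] at this
    omega
  have h := (isTuckerLabeling_blockLabel s hP.2.2).card_lt_add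
    (maxColor_mono (multiKneserVerts n m k P s) c)
    (fun U V => hc.maxColor_eq_zero hempty)
    (fun U V hUV hU hV => level_blockLabel_lt_Mrpi hUV (hc.cappedCard_lt hP.2.1 hU)
      (hc.cappedCard_lt hP.2.1 hV))
    (fun U V => level_blockLabel_pos s hP.2.2) hc.maxColor_le
  rwa [Fintype.card_fin] at h

end IsKneserColoring

end LowerBound

section UpperBound

variable {n m r k : ℕ} {P : Fin m → Finset (Fin n)} {s : Fin m → ℕ}

/-- A member of `F` that meets `R` is colored by one of its elements in `R`, and all the others
share the last color. -/
lemma exists_isKneserColoring_of_not_disjoint (hr : 2 ≤ r) {F : Finset (Finset (Fin n))}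
    (R : Finset (Fin n))
    (hR : ∀ E ⊆ F, #E = r → (E : Set (Finset (Fin n))).Pairwise (fun A B => Disjoint A B) →
      ∃ A ∈ E, ¬ Disjoint A R) :
    ∃ c, IsKneserColoring n r (#R + 1) F c := by
  have hcolor (A : Finset (Fin n)) : ∃ j : ℕ, (Disjoint A R ∧ j = #R + 1) ∨
      ∃ x : R, x.1 ∈ A ∧ j = R.equivFin x + 1 := by
    by_cases h : Disjoint A R
    · exact ⟨_, Or.inl ⟨h, rfl⟩⟩
    · obtain ⟨x, hxA, hxR⟩ := not_disjoint_iff.1 h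
      exact ⟨_, Or.inr ⟨⟨x, hxR⟩, hxA, rfl⟩⟩
  choose c hc using hcolor
  refine ⟨c, fun A _ => mem_Icc.2 ?_, ?_⟩
  · rcases hc A with ⟨-, h⟩ | ⟨x, -, h⟩ <;> omega
  rintro E hE hEr hdisj ⟨j, hj⟩
  obtain ⟨A, hA, hAR⟩ := hR E hE hEr hdisj
  obtain ⟨B, hB, hBA⟩ := exists_mem_ne (by omega : 1 < #E) A
  obtain ⟨x, hxA, hx⟩ := (hc A).resolve_left fun h => hAR h.1
  rcases hc B with ⟨-, hB'⟩ | ⟨y, hyB, hy⟩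
  · have := hj A hA
    have := hj B hB
    omega
  · have hyx : y = x := R.equivFin.injective <| Fin.ext <| by
      have := hj A hA
      have := hj B hB
      omega
    exact disjoint_left.1 (hdisj hB hA hBA) hyB (hyx ▸ hxA)

lemma card_biUnion_inter_le_frpi {E : Finset (Finset (Fin n))}
    (hE : E ⊆ multiKneserVerts n m k P s) (hEr : #E = r) (i : Fin m) :
    #(E.biUnion id ∩ P i) ≤ frpi n m r P s i := by
  rw [frpi_eq_min]
  refine le_min ?_ (card_le_card inter_subset_right)
  rw [biUnion_inter, ← hEr]
  exact card_biUnion_le_card_mul _ _ _ fun A hA => (mem_multiKneserVerts.1 (hE hA)).2 i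

lemma mul_le_sum_frpi_add_card_sdiff {E : Finset (Finset (Fin n))}
    (hE : E ⊆ multiKneserVerts n m k P s) (hEr : #E = r)
    (hdisj : (E : Set (Finset (Fin n))).Pairwise fun A B => Disjoint A B)
    {T : Finset (Fin n)} (hT : ∀ A ∈ E, A ⊆ T) (S : Finset (Fin m)) :
    r * k ≤ ∑ i ∈ S, frpi n m r P s i + #(T \ S.biUnion P) := by
  have hcard : #(E.biUnion id) = r * k := by
    rw [card_biUnion (t := id) hdisj, ← hEr]
    exact sum_const_nat fun A hA => (mem_multiKneserVerts.1 (hE hA)).1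
  rw [← hcard, ← card_inter_add_card_sdiff _ (S.biUnion P), inter_biUnion]
  refine add_le_add ?_ (card_le_card (sdiff_subset_sdiff (biUnion_subset.2 hT) Subset.rfl))
  exact card_biUnion_le.trans (sum_le_sum fun i _ => card_biUnion_inter_le_frpi hE hEr i)

theorem exists_isKneserColoring (hr : 2 ≤ r) (hk : 1 ≤ k)
    (hP : ∀ i j, i ≠ j → Disjoint (P i) (P j)) :
    ∃ c, IsKneserColoring n r (n - Mrpi n m r k P s + 1) (multiKneserVerts n m k P s) c := by
  obtain ⟨S, hS, hM⟩ := exists_Mrpi_eq n m r k P s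
  have hcard : #(S.biUnion P) = ∑ i ∈ S, frpi n m r P s i +
      ∑ i ∈ S, (#(P i) - frpi n m r P s i) := by
    rw [card_biUnion fun i _ j _ => hP i j, ← sum_add_distrib]
    exact sum_congr rfl fun i _ => (Nat.add_sub_cancel' (frpi_le_card i)).symm
  have hn := (S.biUnion P).card_le_univ
  obtain ⟨T, hST, -, hT⟩ := exists_subsuperset_card_eq (n := min n (Mrpi n m r k P s))
    (subset_univ (S.biUnion P)) (by rw [Fintype.card_fin] at hn; omega) (by simp)
  have hTc : #Tᶜ = n - Mrpi n m r k P s := by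
    rw [card_compl, hT, Fintype.card_fin]
    omega
  rw [← hTc]
  refine exists_isKneserColoring_of_not_disjoint hr Tᶜ fun E hE hEr hdisj => ?_
  by_contra! hET
  have hcover := mul_le_sum_frpi_add_card_sdiff hE hEr hdisj
    (fun A hA => disjoint_compl_right_iff.1 (hET A hA)) S
  rw [card_sdiff_of_subset hST] at hcover
  have : 0 < r * k := by positivity
  omega

end UpperBound

theorem stmt10 (n m k : ℕ) (hn : 1 ≤ n) (hm : 1 ≤ m) (hk : 1 ≤ k)
    (P : Fin m → Finset (Fin n)) (hP : IsPartition n m P)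
    (s : Fin m → ℕ) (hs : ∀ i, 1 ≤ s i) (hsP : ∀ i, s i ≤ (P i).card)
    (hks : k ≤ ∑ i, s i) :
    kneserChrom n 2 (multiKneserVerts n m k P s) = max 1 (n - Mrpi n m 2 k P s + 1) := by
  have hcolorable := exists_isKneserColoring (s := s) le_rfl hk hP.2.1
  rw [max_eq_right (Nat.le_add_left 1 _)]
  refine le_antisymm (Nat.sInf_le hcolorable) (le_csInf ⟨_, hcolorable⟩ ?_)
  rintro t ⟨c, hc⟩
  obtain ⟨A, hA⟩ := multiKneserVerts_nonempty hP.2.1 hsP hks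
  obtain ⟨hcA, hcAt⟩ := mem_Icc.1 (hc.1 A hA)
  have := hc.lt_Mrpi_add hk hP
  omega
end

section
/- Let F be a hypergraph on vertex set [n] and set r = n − alt_2(F). Then any proper coloring of the Kneser graph KG^2(F) with colors {1,...,k} (k arbitrary) contains a completely multicolored complete bipartite subgraph K_{⌈r/2⌉, ⌊r/2⌋}; moreover the r distinct colors appearing on it can be enumerated as c_1 < c_2 < ... < c_r so that colors with odd index all occur on one side of the bipartition and colors with even index all occur on the other side. -/
open Finset

/-- `l` is (the index list of) an alternating subsequence of
`(X (σ 1), ..., X (σ n))`: indices are increasing, all chosen entries are nonzero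
(`≠ none`), and any two consecutive chosen entries differ. -/
def IsAltList {α : Type*} (n : ℕ) (σ : Equiv.Perm (Fin n))
    (X : Fin n → Option α) (l : List (Fin n)) : Prop :=
  l.Chain' (· < ·) ∧ (∀ i ∈ l, X (σ i) ≠ none) ∧
    l.Chain' (fun i j => X (σ i) ≠ X (σ j))

/-- `alt_σ(X)`: maximum length of an alternating subsequence of nonzero entries of
`(X (σ 1), ..., X (σ n))`. -/
noncomputable def altVec {α : Type*} (n : ℕ) (σ : Equiv.Perm (Fin n))
    (X : Fin n → Option α) : ℕ :=
  sSup {k | ∃ l : List (Fin n), IsAltList n σ X l ∧ l.length = k}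

/-- `alt_{r,σ}(F)`: the largest `ℓ` such that some nonzero `X ∈ (Z_r ∪ {0})^n` has
`alt_σ(X) = ℓ` and no `X^j` contains a member of `F`. -/
noncomputable def altHyp (n r : ℕ) (σ : Equiv.Perm (Fin n))
    (F : Finset (Finset (Fin n))) : ℕ :=
  sSup {k | ∃ X : Fin n → Option (Fin r), (∃ a, X a ≠ none) ∧
    altVec n σ X = k ∧ ∀ j : Fin r, ∀ A ∈ F, ¬ ∀ a ∈ A, X a = some j}

/-- `alt_r(F) = min_σ alt_{r,σ}(F)`. -/
noncomputable def altNum (n r : ℕ) (F : Finset (Finset (Fin n))) : ℕ :=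
  sInf {k | ∃ σ : Equiv.Perm (Fin n), altHyp n r σ F = k}

/-!
Let `t` assign `0` or `1` to the nonzero sign vectors so that opposite vectors get different
values. Modulo 2, the number of maximal flags of faces of the cross-polytope along which `t`
alternates, and whose top face lies in a fixed hemisphere, is preserved when a coordinate is
removed, so it is odd. This is Tucker's lemma: if an odd labelling by nonzero integers has no two
nested faces with opposite labels, and its absolute value is monotone, then the absolute value
increases along an alternating flag and reaches the dimension.

For a permutation realizing `a = alt_2(F)`, label `X` by `± alt(X)` if `alt(X) ≤ a`, the sign being
that of the first nonzero entry. If `alt(X) > a`, one of `X⁺`, `X⁻` contains a member of `F`; record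
for each color the side on which it occurs (properness makes it unique). This is a nonzero sign
vector `Y` indexed by the ordered set of colors; label `X` by `± (a + alt(Y))`, the sign being the
first one of `Y`. Tucker's lemma gives `X` with `alt(Y) ≥ n - a`, and the colors of an alternating
subsequence of `Y` are the required ones.
-/

lemma sum_sum_erase_eq_zero_of_symm {ι R : Type*} [DecidableEq ι] [Semiring R] [CharP R 2]
    (S : Finset ι) {g : ι → ι → R} (hg : ∀ p q, g p q = g q p) :
    ∑ p ∈ S, ∑ q ∈ S.erase p, g p q = 0 := by
  rw [sum_sigma']
  refine sum_involution (fun x _ ↦ ⟨x.2, x.1⟩) ?_ ?_ ?_ (fun _ _ ↦ rfl)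
  · rintro ⟨p, q⟩ _
    rw [hg p q, CharTwo.add_self_eq_zero]
  · rintro ⟨p, q⟩ h _ heq
    simp only [mem_sigma, mem_erase, Sigma.mk.injEq] at h heq
    exact h.2.1 heq.1
  · rintro ⟨p, q⟩ h
    simp only [mem_sigma, mem_erase] at h ⊢
    exact ⟨h.2.2, h.2.1.symm, h.1⟩

lemma natAbs_add_sign_mul {u : ℤ} (hu : u ≠ 0) (a : ℕ) :
    (u + u.sign * a).natAbs = u.natAbs + a := by
  rcases hu.lt_or_gt with h | h
  · rw [Int.sign_eq_neg_one_of_neg h]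
    omega
  · rw [Int.sign_eq_one_of_pos h]
    omega

lemma add_sign_mul_add_ne_zero {u v : ℤ} (huv : u + v ≠ 0) (a : ℕ) :
    u + u.sign * a + (v + v.sign * a) ≠ 0 := by
  rcases lt_trichotomy u 0 with hu | rfl | hu <;> rcases lt_trichotomy v 0 with hv | rfl | hv <;>
    simp only [Int.sign_eq_neg_one_of_neg, Int.sign_eq_one_of_pos, Int.sign_zero, *] <;> omega

/-- Sign vectors indexed by `ι`: the elements of `{+1, 0, -1}^ι`, also viewed as the faces of the
cross-polytope. The pointwise order on functions is not the face order, which is `IsFace`. -/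
abbrev SignVec (ι : Type*) := ι → SignType

namespace SignVec

/-! ### The face order -/

section Face

variable {ι : Type*}

/-- The face order on sign vectors: `X⁺ ⊆ Y⁺` and `X⁻ ⊆ Y⁻`. -/
def IsFace (X Y : SignVec ι) : Prop := ∀ i, X i ≠ 0 → Y i = X i

lemma isFace_update_zero [DecidableEq ι] (X : SignVec ι) (p : ι) :
    IsFace (Function.update X p 0) X := by
  intro i hi
  rcases eq_or_ne i p with rfl | hip
  · simp at hi
  · rw [Function.update_of_ne hip]

lemma neg_update_zero [DecidableEq ι] (X : SignVec ι) (p : ι) :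
    Function.update (-X) p 0 = -Function.update X p 0 := by
  simpa using (Function.update_neg X p 0)

end Face

/-! ### Alternating flags and Tucker's lemma -/

section Support

variable {ι : Type*} [Fintype ι] {X : SignVec ι} {i p : ι}

/-- The support of a sign vector, as a finset. -/
def supp (X : SignVec ι) : Finset ι := {i | X i ≠ 0}

@[simp]
lemma mem_supp : i ∈ supp X ↔ X i ≠ 0 := by simp [supp]

@[simp]
lemma supp_neg (X : SignVec ι) : supp (-X) = supp X := by
  ext
  simp

lemma supp_nonempty : (supp X).Nonempty ↔ X ≠ 0 := by
  simp [Finset.Nonempty, Function.ne_iff]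

lemma ne_zero_of_card_supp {d : ℕ} (h : #(supp X) = d + 1) : X ≠ 0 :=
  supp_nonempty.1 (card_pos.1 (by omega))

variable [DecidableEq ι]

lemma supp_update_zero (X : SignVec ι) (p : ι) :
    supp (Function.update X p 0) = (supp X).erase p := by
  ext i
  by_cases h : i = p <;> simp [h]

lemma supp_update_of_ne_zero {s : SignType} (hs : s ≠ 0) (hp : X p ≠ 0) :
    supp (Function.update X p s) = supp X := by
  ext i
  rcases eq_or_ne i p with rfl | h
  · simp [hs, hp]
  · simp [h]

lemma card_supp_update_zero {d : ℕ} (h : #(supp X) = d + 1) (hp : p ∈ supp X) :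
    #(supp (Function.update X p 0)) = d := by
  rw [supp_update_zero, card_erase_of_mem hp, h, Nat.add_sub_cancel]

end Support

section Flags

variable {ι : Type*} [Fintype ι] [DecidableEq ι] {t : SignVec ι → ZMod 2} {d : ℕ} {X : SignVec ι}

/-- The number, modulo 2, of flags `X = X_d ⊃ ⋯ ⊃ X_0`, each face arising from the previous one by
deleting a nonzero coordinate, along which the values of `t` alternate. -/
def altFlags (t : SignVec ι → ZMod 2) : ℕ → SignVec ι → ZMod 2
  | 0, _ => 1
  | d + 1, X => ∑ p ∈ supp X,
      (t X + t (Function.update X p 0)) * altFlags t d (Function.update X p 0)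

lemma sum_altFlags_update_zero (t : SignVec ι → ZMod 2) (h : #(supp X) = d + 2) :
    ∑ p ∈ supp X, altFlags t d (Function.update X p 0) = 0 := by
  induction d generalizing X with
  | zero =>
    simp only [altFlags, sum_const, h]
    decide
  | succ d ih =>
    let g (p q : ι) : ZMod 2 :=
      t (Function.update (Function.update X p 0) q 0) *
        altFlags t d (Function.update (Function.update X p 0) q 0)
    have expand : ∀ p ∈ supp X,
        altFlags t (d + 1) (Function.update X p 0) = ∑ q ∈ (supp X).erase p, g p q := by
      intro p hp
      rw [altFlags]
      simp only [add_mul, sum_add_distrib, ← mul_sum, ih (card_supp_update_zero h hp), mul_zero,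
        zero_add]
      rw [supp_update_zero]
    have symm : ∀ p q, g p q = g q p := by
      intro p q
      rcases eq_or_ne p q with rfl | hpq
      · rfl
      · simp only [g, Function.update_comm hpq]
    rw [sum_congr rfl expand, sum_sum_erase_eq_zero_of_symm _ symm]

lemma altFlags_succ (t : SignVec ι → ZMod 2) (h : #(supp X) = d + 2) :
    altFlags t (d + 1) X =
      ∑ p ∈ supp X, t (Function.update X p 0) * altFlags t d (Function.update X p 0) := by
  simp only [altFlags, add_mul, sum_add_distrib, ← mul_sum, sum_altFlags_update_zero t h,
    mul_zero, zero_add]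

lemma altFlags_neg (ht : ∀ X, X ≠ 0 → t (-X) = t X + 1) (h : #(supp X) = d + 1) :
    altFlags t d (-X) = altFlags t d X := by
  induction d generalizing X with
  | zero => rfl
  | succ d ih =>
    simp only [altFlags, supp_neg]
    refine sum_congr rfl fun p hp ↦ ?_
    have hcard := card_supp_update_zero h hp
    rw [neg_update_zero, ih hcard, ht X (ne_zero_of_card_supp h),
      ht _ (ne_zero_of_card_supp hcard), add_add_add_comm, CharTwo.add_self_eq_zero, add_zero]

lemma le_of_altFlags_ne_zero {m : SignVec ι → ℕ} (hpos : ∀ X, X ≠ 0 → 0 < m X)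
    (hlt : ∀ X Y, X ≠ 0 → IsFace X Y → t X ≠ t Y → m X < m Y)
    (h : #(supp X) = d + 1) (hX : altFlags t d X ≠ 0) : d + 1 ≤ m X := by
  induction d generalizing X with
  | zero => exact hpos X (ne_zero_of_card_supp h)
  | succ d ih =>
    obtain ⟨p, hp, hterm⟩ := exists_ne_zero_of_sum_ne_zero hX
    have hcard := card_supp_update_zero h hp
    have hface := ih hcard (right_ne_zero_of_mul hterm)
    have ht : t (Function.update X p 0) ≠ t X := fun heq ↦
      left_ne_zero_of_mul hterm (by rw [heq, CharTwo.add_self_eq_zero])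
    have := hlt _ X (ne_zero_of_card_supp hcard) (isFace_update_zero X p) ht
    omega

end Flags

section Hemisphere

variable {ι : Type*} [Fintype ι] [DecidableEq ι] {S : Finset ι} {p q : ι}

/-- The sign vectors with support `S` and value `+1` at `p`: the facets of a hemisphere of the
cross-polytope on the coordinates in `S`. -/
def hemisphere (S : Finset ι) (p : ι) : Finset (SignVec ι) := {X | supp X = S ∧ X p = 1}

lemma mem_hemisphere {X : SignVec ι} : X ∈ hemisphere S p ↔ supp X = S ∧ X p = 1 := by
  simp [hemisphere]

lemma hemisphere_singleton (p : ι) : hemisphere {p} p = {Pi.single p 1} := by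
  ext X
  rw [mem_hemisphere, mem_singleton]
  constructor
  · rintro ⟨hS, hp⟩
    ext1 i
    rcases eq_or_ne i p with rfl | hi
    · rw [hp, Pi.single_eq_same]
    · have : i ∉ supp X := by rwa [hS, mem_singleton]
      rw [Pi.single_eq_of_ne hi]
      simpa using this
  · rintro rfl
    refine ⟨?_, Pi.single_eq_same p 1⟩
    ext i
    rcases eq_or_ne i p with rfl | hi <;> simp_all

-- Flipping the sign at `q` is an involution that preserves the summand.
lemma sum_hemisphere_update_of_ne {R : Type*} [Semiring R] [CharP R 2] (hq : q ∈ S) (hqp : q ≠ p)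
    (g : SignVec ι → R) : ∑ X ∈ hemisphere S p, g (Function.update X q 0) = 0 := by
  have hX : ∀ X ∈ hemisphere S p, X q ≠ 0 := fun X h ↦ by
    rwa [← mem_supp, (mem_hemisphere.1 h).1]
  refine sum_involution (fun X _ ↦ Function.update X q (-X q)) ?_ ?_ ?_ ?_
  · intro X _
    rw [Function.update_idem, CharTwo.add_self_eq_zero]
  · intro X h _ heq
    have hflip : -X q = X q := by simpa using congrFun heq q
    exact hX X h (SignType.neg_eq_self_iff.1 hflip)
  · intro X h
    have hsupp := supp_update_of_ne_zero (SignType.neg_eq_zero_iff.not.2 (hX X h)) (hX X h)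
    rw [mem_hemisphere] at h ⊢
    rwa [hsupp, Function.update_of_ne hqp.symm]
  · intro X _
    simp

lemma sum_hemisphere_update_self {M : Type*} [AddCommMonoid M] (hp : p ∈ S)
    (g : SignVec ι → M) :
    ∑ X ∈ hemisphere S p, g (Function.update X p 0) = ∑ X with supp X = S.erase p, g X := by
  refine sum_bij' (fun X _ ↦ Function.update X p 0) (fun X _ ↦ Function.update X p 1)
    ?_ ?_ ?_ ?_ (fun _ _ ↦ rfl)
  · intro X h
    rw [mem_filter_univ, supp_update_zero, (mem_hemisphere.1 h).1]
  · intro X h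
    rw [mem_filter_univ] at h
    refine mem_hemisphere.2 ⟨?_, Function.update_self ..⟩
    ext i
    rcases eq_or_ne i p with rfl | hi
    · simp [hp]
    · have := congrArg (i ∈ ·) h
      simpa [hi] using this
  · intro X h
    rw [Function.update_idem, ← (mem_hemisphere.1 h).2, Function.update_eq_self]
  · intro X h
    have hXp : X p = 0 := by
      rw [mem_filter_univ] at h
      simpa using (congrArg (p ∈ ·) h)
    rw [Function.update_idem, ← hXp, Function.update_eq_self]

lemma sum_supp_eq_sum_hemisphere {M : Type*} [AddCommMonoid M] (hp : p ∈ S)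
    (g : SignVec ι → M) :
    ∑ X with supp X = S, g X = ∑ X ∈ hemisphere S p, (g X + g (-X)) := by
  have hneg : ∑ X with supp X = S ∧ ¬ X p = 1, g X = ∑ X ∈ hemisphere S p, g (-X) := by
    refine sum_equiv (Equiv.neg _) (fun X ↦ ?_) (fun X _ ↦ by simp)
    rw [mem_filter_univ, Equiv.neg_apply, mem_hemisphere, supp_neg, Pi.neg_apply]
    refine and_congr_right fun hS ↦ ?_
    have ne_one_iff : ∀ s : SignType, s ≠ 0 → (¬ s = 1 ↔ -s = 1) := by decide
    exact ne_one_iff _ (mem_supp.1 (hS ▸ hp))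
  rw [sum_add_distrib, ← hneg, hemisphere, ← filter_filter, ← filter_filter,
    sum_filter_add_sum_filter_not]

theorem sum_hemisphere_altFlags {t : SignVec ι → ZMod 2} (ht : ∀ X, X ≠ 0 → t (-X) = t X + 1)
    {d : ℕ} (hS : #S = d + 1) (hp : p ∈ S) : ∑ X ∈ hemisphere S p, altFlags t d X = 1 := by
  induction d generalizing S p with
  | zero =>
    obtain ⟨q, rfl⟩ := card_eq_one.1 hS
    obtain rfl := mem_singleton.1 hp
    rw [hemisphere_singleton, sum_singleton, altFlags]
  | succ d ih =>
    have hcard : #(S.erase p) = d + 1 := by rw [card_erase_of_mem hp, hS, Nat.add_sub_cancel]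
    obtain ⟨q, hq⟩ : (S.erase p).Nonempty := card_pos.1 (by omega)
    let g (X : SignVec ι) : ZMod 2 := t X * altFlags t d X
    calc ∑ X ∈ hemisphere S p, altFlags t (d + 1) X
      _ = ∑ X ∈ hemisphere S p, ∑ r ∈ S, g (Function.update X r 0) := by
        refine sum_congr rfl fun X hX ↦ ?_
        obtain ⟨rfl, -⟩ := mem_hemisphere.1 hX
        exact altFlags_succ t hS
      _ = ∑ r ∈ S, ∑ X ∈ hemisphere S p, g (Function.update X r 0) := sum_comm
      _ = ∑ X ∈ hemisphere S p, g (Function.update X p 0) :=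
        sum_eq_single_of_mem p hp fun _ hr hrp ↦ sum_hemisphere_update_of_ne hr hrp g
      _ = ∑ X with supp X = S.erase p, g X := sum_hemisphere_update_self hp g
      _ = ∑ X ∈ hemisphere (S.erase p) q, (g X + g (-X)) := sum_supp_eq_sum_hemisphere hq g
      _ = ∑ X ∈ hemisphere (S.erase p) q, altFlags t d X := by
        refine sum_congr rfl fun X hX ↦ ?_
        have hXcard : #(supp X) = d + 1 := (mem_hemisphere.1 hX).1 ▸ hcard
        simp only [g]
        rw [altFlags_neg ht hXcard, ht X (ne_zero_of_card_supp hXcard), ← add_mul, ← add_assoc,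
          CharTwo.add_self_eq_zero, zero_add, one_mul]
      _ = 1 := ih hcard hq

end Hemisphere

section Tucker

variable {ι κ : Type*} {lam : SignVec ι → ℤ} {mu : SignVec κ → ℤ}

/-- The labellings of sign vectors to which Tucker's lemma is applied: odd, with no two nested
nonzero faces carrying opposite labels (in particular nonzero labels on nonzero faces), and, unlike
in Tucker's lemma in general, monotone in absolute value. -/
structure IsTuckerLabelling (lam : SignVec ι → ℤ) : Prop where
  map_neg : ∀ X, lam (-X) = -lam X
  add_ne_zero : ∀ X Y, X ≠ 0 → IsFace X Y → lam X + lam Y ≠ 0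
  natAbs_mono : ∀ X Y, IsFace X Y → (lam X).natAbs ≤ (lam Y).natAbs

namespace IsTuckerLabelling

lemma ne_zero (h : IsTuckerLabelling lam) {X : SignVec ι} (hX : X ≠ 0) : lam X ≠ 0 := by
  have := h.add_ne_zero X X hX fun _ _ ↦ rfl
  omega

lemma comp_surjective (h : IsTuckerLabelling lam) {e : ι → κ} (he : Function.Surjective e) :
    IsTuckerLabelling fun X : SignVec κ ↦ lam (X ∘ e) where
  map_neg X := h.map_neg (X ∘ e)
  add_ne_zero _ _ hX hXY :=
    h.add_ne_zero _ _ (fun h0 ↦ hX (he.injective_comp_right h0)) fun i ↦ hXY (e i)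
  natAbs_mono _ _ hXY := h.natAbs_mono _ _ fun i ↦ hXY (e i)

theorem exists_card_le_natAbs [Fintype ι] (h : IsTuckerLabelling lam) :
    ∃ X, Fintype.card ι ≤ (lam X).natAbs := by
  classical
  rcases isEmpty_or_nonempty ι with _ | ⟨⟨p⟩⟩
  · exact ⟨0, by simp⟩
  obtain ⟨d, hd⟩ := Nat.exists_eq_add_one.2 (Fintype.card_pos_iff.2 ⟨p⟩)
  let t (X : SignVec ι) : ZMod 2 := if 0 < lam X then 1 else 0
  have ht : ∀ X, X ≠ 0 → t (-X) = t X + 1 := by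
    intro X hX
    have := h.ne_zero hX
    rcases this.lt_or_gt with hlt | hgt
    · simp [t, h.map_neg, hlt, hlt.le]
    · simp [t, h.map_neg, hgt, hgt.le, CharTwo.add_self_eq_zero]
  have hlt : ∀ X Y, X ≠ 0 → IsFace X Y → t X ≠ t Y → (lam X).natAbs < (lam Y).natAbs := by
    intro X Y hX hXY htXY
    refine (h.natAbs_mono X Y hXY).lt_of_ne fun heq ↦ htXY ?_
    have := h.add_ne_zero X Y hX hXY
    simp only [t, show lam X = lam Y by omega]
  have hsum := sum_hemisphere_altFlags ht hd (mem_univ p)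
  obtain ⟨X, hX, hne⟩ := exists_ne_zero_of_sum_ne_zero (hsum.symm ▸ one_ne_zero)
  refine ⟨X, hd ▸ le_of_altFlags_ne_zero (m := fun X ↦ (lam X).natAbs) ?_ hlt ?_ hne⟩
  · exact fun X hX ↦ Int.natAbs_pos.2 (h.ne_zero hX)
  · rwa [(mem_hemisphere.1 hX).1]

lemma ite_comp (hlam : IsTuckerLabelling lam) (hmu : IsTuckerLabelling mu) {a : ℕ}
    {Φ : SignVec ι → SignVec κ} (hneg : ∀ X, Φ (-X) = -Φ X)
    (hmono : ∀ X Y, IsFace X Y → IsFace (Φ X) (Φ Y)) (hΦ : ∀ X, a < (lam X).natAbs → Φ X ≠ 0) :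
    IsTuckerLabelling fun X ↦
      if (lam X).natAbs ≤ a then lam X else mu (Φ X) + (mu (Φ X)).sign * a where
  map_neg X := by
    simp only [hlam.map_neg, Int.natAbs_neg, hneg, hmu.map_neg, Int.sign_neg]
    split_ifs <;> ring
  add_ne_zero X Y hX hXY := by
    have hle := hlam.natAbs_mono X Y hXY
    have hlow := hlam.add_ne_zero X Y hX hXY
    have hY : a < (lam Y).natAbs → mu (Φ Y) ≠ 0 := fun h ↦ hmu.ne_zero (hΦ Y h)
    split_ifs with haX haY haY
    · exact hlow
    · have := natAbs_add_sign_mul (hY (by omega)) a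
      omega
    · omega
    · have hhigh := hmu.add_ne_zero _ _ (hΦ X (by omega)) (hmono X Y hXY)
      exact add_sign_mul_add_ne_zero hhigh a
  natAbs_mono X Y hXY := by
    have hle := hlam.natAbs_mono X Y hXY
    have hΦle := hmu.natAbs_mono _ _ (hmono X Y hXY)
    have habs : ∀ Z, a < (lam Z).natAbs →
        (mu (Φ Z) + (mu (Φ Z)).sign * a).natAbs = (mu (Φ Z)).natAbs + a :=
      fun Z hZ ↦ natAbs_add_sign_mul (hmu.ne_zero (hΦ Z hZ)) a
    have hX := habs X
    have hY := habs Y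
    split_ifs <;> omega

theorem exists_card_le_add_natAbs [Fintype ι] (hlam : IsTuckerLabelling lam)
    (hmu : IsTuckerLabelling mu) {a : ℕ} {Φ : SignVec ι → SignVec κ}
    (hneg : ∀ X, Φ (-X) = -Φ X) (hmono : ∀ X Y, IsFace X Y → IsFace (Φ X) (Φ Y))
    (hΦ : ∀ X, a < (lam X).natAbs → Φ X ≠ 0) :
    ∃ X, Fintype.card ι ≤ a + (mu (Φ X)).natAbs := by
  obtain ⟨X, hX⟩ := (hlam.ite_comp hmu hneg hmono hΦ).exists_card_le_natAbs
  refine ⟨X, hX.trans ?_⟩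
  split_ifs with ha
  · omega
  · rw [natAbs_add_sign_mul (hmu.ne_zero (hΦ X (by omega))), add_comm]

end IsTuckerLabelling

end Tucker

/-! ### Alternating subsequences -/

section Alternation

variable {ι : Type*} [LinearOrder ι] {x y : SignVec ι} {l : List ι} {i : ι}

/-- `l` lists the positions of an alternating subsequence of nonzero entries of `x`. This is the
notion `IsAltList`, for an arbitrary linearly ordered index set. -/
structure IsAlternating (x : SignVec ι) (l : List ι) : Prop where
  lt : l.IsChain (· < ·)
  ne_zero : ∀ i ∈ l, x i ≠ 0
  ne : l.IsChain fun i j ↦ x i ≠ x j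

namespace IsAlternating

lemma pairwise_lt (h : IsAlternating x l) : l.Pairwise (· < ·) := List.isChain_iff_pairwise.1 h.lt

lemma neg (h : IsAlternating x l) : IsAlternating (-x) l where
  lt := h.lt
  ne_zero i hi := by simpa using h.ne_zero i hi
  ne := by simpa using h.ne

lemma of_isFace (h : IsAlternating x l) (hxy : IsFace x y) : IsAlternating y l where
  lt := h.lt
  ne_zero i hi := by simpa [hxy i (h.ne_zero i hi)] using h.ne_zero i hi
  ne := by
    have heq : ∀ i (hi : i < l.length), y l[i] = x l[i] :=
      fun i hi ↦ hxy _ (h.ne_zero _ (List.getElem_mem hi))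
    simpa only [List.isChain_iff_getElem, heq] using h.ne

lemma singleton (hi : x i ≠ 0) : IsAlternating x [i] where
  lt := .singleton i
  ne_zero := by simpa using hi
  ne := .singleton i

lemma exists_sign (h : IsAlternating x l) :
    ∃ ε : SignType, ε ≠ 0 ∧ ∀ j (hj : j < l.length), x l[j] = (-1) ^ j * ε := by
  rcases l with _ | ⟨i, l⟩
  · exact ⟨1, by simp⟩
  refine ⟨x i, h.ne_zero i (by simp), fun j hj ↦ ?_⟩
  induction j with
  | zero => simp
  | succ j ih =>
    have eq_neg_of_ne : ∀ a b : SignType, a ≠ 0 → b ≠ 0 → a ≠ b → b = -a := by decide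
    rw [eq_neg_of_ne _ _ (h.ne_zero _ (List.getElem_mem _)) (h.ne_zero _ (List.getElem_mem _))
      (List.isChain_iff_getElem.1 h.ne j hj), ih (by omega), pow_succ']
    simp

end IsAlternating

/-- The maximum length of an alternating subsequence of nonzero entries of `x`. -/
noncomputable def altLength (x : SignVec ι) : ℕ :=
  sSup {k | ∃ l, IsAlternating x l ∧ l.length = k}

lemma altLength_neg (x : SignVec ι) : altLength (-x) = altLength x := by
  have hiff (l : List ι) : IsAlternating (-x) l ↔ IsAlternating x l :=
    ⟨fun h ↦ neg_neg x ▸ h.neg, fun h ↦ h.neg⟩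
  simp only [altLength, hiff]

variable [Finite ι]

lemma IsAlternating.length_le_card (h : IsAlternating x l) : l.length ≤ Nat.card ι := by
  have := Fintype.ofFinite ι
  rw [Nat.card_eq_fintype_card]
  exact List.Nodup.length_le_card (h.pairwise_lt.imp ne_of_lt)

lemma bddAbove_length_isAlternating (x : SignVec ι) :
    BddAbove {k | ∃ l, IsAlternating x l ∧ l.length = k} :=
  ⟨Nat.card ι, by rintro _ ⟨l, hl, rfl⟩; exact hl.length_le_card⟩

lemma IsAlternating.length_le_altLength (h : IsAlternating x l) : l.length ≤ altLength x :=
  le_csSup (bddAbove_length_isAlternating x) ⟨l, h, rfl⟩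

lemma exists_isAlternating_length_eq (x : SignVec ι) :
    ∃ l, IsAlternating x l ∧ l.length = altLength x :=
  Nat.sSup_mem (s := {k | ∃ l, IsAlternating x l ∧ l.length = k})
    ⟨0, [], ⟨.nil, by simp, .nil⟩, rfl⟩ (bddAbove_length_isAlternating x)

lemma altLength_pos : 0 < altLength x ↔ x ≠ 0 := by
  constructor
  · rintro h rfl
    obtain ⟨l, hl, hlen⟩ := exists_isAlternating_length_eq (0 : SignVec ι)
    obtain ⟨i, hi⟩ := List.exists_mem_of_length_pos (hlen ▸ h)
    exact hl.ne_zero i hi rfl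
  · intro h
    obtain ⟨i, hi⟩ := Function.ne_iff.1 h
    exact (IsAlternating.singleton hi).length_le_altLength

lemma IsFace.altLength_le (h : IsFace x y) : altLength x ≤ altLength y := by
  obtain ⟨l, hl, hlen⟩ := exists_isAlternating_length_eq x
  exact hlen ▸ (hl.of_isFace h).length_le_altLength

end Alternation

section AltLabel

variable {ι : Type*} [LinearOrder ι] [Fintype ι] {x y : SignVec ι} {l : List ι} {i : ι}

/-- The first nonzero entry of `x`, or `0` if `x = 0`. -/
def leadSign (x : SignVec ι) : SignType :=
  if h : (supp x).Nonempty then x ((supp x).min' h) else 0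

lemma leadSign_neg (x : SignVec ι) : leadSign (-x) = -leadSign x := by
  simp only [leadSign, supp_neg]
  split_ifs <;> simp

lemma exists_leadSign_eq (hx : x ≠ 0) :
    ∃ i, x i ≠ 0 ∧ leadSign x = x i ∧ ∀ j, x j ≠ 0 → i ≤ j := by
  have hne := supp_nonempty.2 hx
  exact ⟨_, mem_supp.1 (min'_mem _ hne), dif_pos hne, fun j hj ↦ min'_le _ _ (mem_supp.2 hj)⟩

lemma leadSign_ne_zero (hx : x ≠ 0) : leadSign x ≠ 0 := by
  obtain ⟨i, hi, hlead, -⟩ := exists_leadSign_eq hx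
  rwa [hlead]

-- Otherwise the first nonzero position could be prepended to the list.
lemma IsAlternating.apply_head_eq_leadSign (h : IsAlternating x (i :: l))
    (hlen : (i :: l).length = altLength x) : x i = leadSign x := by
  by_contra hne
  have hi := h.ne_zero i (by simp)
  obtain ⟨j, hj, hlead, hmin⟩ := exists_leadSign_eq (Function.ne_iff.2 ⟨i, hi⟩)
  rw [hlead] at hne
  have hji : j < i := (hmin i hi).lt_of_ne (by rintro rfl; exact hne rfl)
  have hcons : IsAlternating x (j :: i :: l) :=
    ⟨h.lt.cons_cons hji, List.forall_mem_cons.2 ⟨hj, h.ne_zero⟩, h.ne.cons_cons (Ne.symm hne)⟩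
  have := hcons.length_le_altLength
  rw [List.length_cons, hlen] at this
  omega

lemma IsFace.leadSign_eq (h : IsFace x y) (hx : x ≠ 0) (hlen : altLength x = altLength y) :
    leadSign x = leadSign y := by
  obtain ⟨l, hl, hlx⟩ := exists_isAlternating_length_eq x
  obtain ⟨i, l, rfl⟩ := List.exists_cons_of_length_pos (hlx ▸ altLength_pos.2 hx)
  rw [← hl.apply_head_eq_leadSign hlx, ← (hl.of_isFace h).apply_head_eq_leadSign (hlx.trans hlen),
    h i (hl.ne_zero i (by simp))]

/-- The label `± alt(x)` of a sign vector, with the sign of its first nonzero entry. -/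
noncomputable def altLabel (x : SignVec ι) : ℤ := leadSign x * altLength x

lemma natAbs_altLabel (x : SignVec ι) : (altLabel x).natAbs = altLength x := by
  have natAbs_sign : ∀ s : SignType, s ≠ 0 → (s : ℤ).natAbs = 1 := by decide
  rcases eq_or_ne x 0 with rfl | hx
  · have : altLength (0 : SignVec ι) = 0 := by
      simpa using (altLength_pos (x := (0 : SignVec ι))).not
    simp [altLabel, this]
  · rw [altLabel, Int.natAbs_mul, natAbs_sign _ (leadSign_ne_zero hx), one_mul, Int.natAbs_natCast]

theorem isTuckerLabelling_altLabel : IsTuckerLabelling (altLabel (ι := ι)) where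
  map_neg x := by rw [altLabel, altLabel, leadSign_neg, altLength_neg, SignType.coe_neg, neg_mul]
  add_ne_zero x y hx hxy hadd := by
    have hlen : altLength x = altLength y := by
      rw [← natAbs_altLabel, ← natAbs_altLabel y]
      omega
    have heq : altLabel x = altLabel y := by rw [altLabel, altLabel, hxy.leadSign_eq hx hlen, hlen]
    have := natAbs_altLabel x
    have := altLength_pos.2 hx
    omega
  natAbs_mono x y hxy := by
    rw [natAbs_altLabel, natAbs_altLabel]
    exact hxy.altLength_le

end AltLabel

/-! ### Alternation numbers of hypergraphs -/

section AltHyp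

/-- The encoding of sign vectors used in `altHyp`: `+1` is `some 0`, `-1` is `some 1`. -/
def toOption {ι : Type*} (X : SignVec ι) (i : ι) : Option (Fin 2) :=
  match X i with
  | .zero => none
  | .pos => some 0
  | .neg => some 1

variable {ι : Type*} {X : SignVec ι} {i j : ι}

lemma toOption_eq_none : toOption X i = none ↔ X i = 0 := by
  unfold toOption
  generalize X i = s
  decide +revert

lemma toOption_eq_some {e : Fin 2} : toOption X i = some e ↔ X i = (-1) ^ (e : ℕ) := by
  unfold toOption
  generalize X i = s
  decide +revert

lemma toOption_inj : toOption X i = toOption X j ↔ X i = X j := by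
  unfold toOption
  generalize X i = s
  generalize X j = s'
  decide +revert

variable {n : ℕ} {σ : Equiv.Perm (Fin n)} {F : Finset (Finset (Fin n))}

lemma altVec_toOption (σ : Equiv.Perm (Fin n)) (X : SignVec (Fin n)) :
    altVec n σ (toOption X) = altLength (X ∘ σ) := by
  have hiff (l : List (Fin n)) : IsAltList n σ (toOption X) l ↔ IsAlternating (X ∘ σ) l := by
    simp only [IsAltList, ne_eq, toOption_eq_none, toOption_inj]
    exact ⟨fun ⟨h₁, h₂, h₃⟩ ↦ ⟨h₁, h₂, h₃⟩, fun h ↦ ⟨h.lt, h.ne_zero, h.ne⟩⟩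
  simp only [altVec, altLength, hiff]

lemma exists_mem_of_altHyp_lt {X : SignVec (Fin n)} (h : altHyp n 2 σ F < altLength (X ∘ σ)) :
    ∃ A ∈ F, ∃ ε : SignType, ε ≠ 0 ∧ ∀ a ∈ A, X a = ε := by
  contrapose! h
  rcases eq_or_ne (X ∘ σ) 0 with h0 | h0
  · exact (Nat.eq_zero_of_not_pos (altLength_pos.not.2 (not_not.2 h0))).trans_le (Nat.zero_le _)
  obtain ⟨i, hi⟩ := Function.ne_iff.1 h0
  have hbdd : BddAbove {k | ∃ X : Fin n → Option (Fin 2), (∃ a, X a ≠ none) ∧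
      altVec n σ X = k ∧ ∀ j : Fin 2, ∀ A ∈ F, ¬ ∀ a ∈ A, X a = some j} :=
    (Set.finite_range (altVec n σ)).bddAbove.mono (by rintro k ⟨Y, -, rfl, -⟩; exact ⟨Y, rfl⟩)
  refine le_csSup hbdd ⟨toOption X, ⟨σ i, toOption_eq_none.not.2 hi⟩, altVec_toOption σ X, ?_⟩
  intro e A hA hAe
  obtain ⟨a, ha, hne⟩ := h A hA ((-1) ^ (e : ℕ)) (pow_ne_zero _ (by decide))
  exact hne (toOption_eq_some.1 (hAe a ha))

end AltHyp

lemma exists_altHyp_eq_altNum (n r : ℕ) (F : Finset (Finset (Fin n))) :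
    ∃ σ, altHyp n r σ F = altNum n r F :=
  Nat.sInf_mem (s := {k | ∃ σ, altHyp n r σ F = k}) ⟨_, 1, rfl⟩

/-! ### The sign vector of colors -/

section Colors

variable {V α : Type*} {F : Finset (Finset V)} {c : Finset V → α} {X Y : SignVec V} {j : α}
  {ε δ : SignType}

/-- The color `j` occurs on a member of `F` contained in the `ε`-part of `X`. -/
def HasColor (F : Finset (Finset V)) (c : Finset V → α) (X : SignVec V) (j : α)
    (ε : SignType) : Prop :=
  ∃ A ∈ F, c A = j ∧ ∀ a ∈ A, X a = ε

lemma disjoint_of_forall_eq {A B : Finset V} (hεδ : ε ≠ δ) (hA : ∀ a ∈ A, X a = ε)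
    (hB : ∀ a ∈ B, X a = δ) : Disjoint A B :=
  Finset.disjoint_left.2 fun a ha hb ↦ hεδ ((hA a ha).symm.trans (hB a hb))

lemma HasColor.unique (hc : ∀ A ∈ F, ∀ B ∈ F, Disjoint A B → c A ≠ c B)
    (hε : HasColor F c X j ε) (hδ : HasColor F c X j δ) : ε = δ := by
  obtain ⟨A, hA, hAj, hAX⟩ := hε
  obtain ⟨B, hB, hBj, hBX⟩ := hδ
  by_contra hne
  exact hc A hA B hB (disjoint_of_forall_eq hne hAX hBX) (hAj.trans hBj.symm)

lemma HasColor.of_isFace (h : HasColor F c X j ε) (hε : ε ≠ 0) (hXY : IsFace X Y) :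
    HasColor F c Y j ε := by
  obtain ⟨A, hA, hAj, hAX⟩ := h
  exact ⟨A, hA, hAj, fun a ha ↦ by rw [hXY a (by rwa [hAX a ha]), hAX a ha]⟩

lemma hasColor_neg : HasColor F c (-X) j ε ↔ HasColor F c X j (-ε) := by
  simp only [HasColor, Pi.neg_apply, neg_eq_iff_eq_neg]

variable [DecidableEq α]

open Classical in
/-- The sign vector, indexed by the colors of the members of `F`, recording for each color the part
of `X` in which it occurs; `0` stands for a color that occurs in neither part. For a proper coloring
no color occurs in both. -/
noncomputable def colorVec (F : Finset (Finset V)) (c : Finset V → α) (X : SignVec V) :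
    SignVec (F.image c) :=
  fun j ↦ if HasColor F c X j 1 then 1 else if HasColor F c X j (-1) then -1 else 0

lemma colorVec_eq_iff (hc : ∀ A ∈ F, ∀ B ∈ F, Disjoint A B → c A ≠ c B) {j : F.image c}
    (hε : ε ≠ 0) : colorVec F c X j = ε ↔ HasColor F c X j ε := by
  have hexcl : HasColor F c X j 1 → ¬ HasColor F c X j (-1) :=
    fun h₁ h₂ ↦ absurd (h₁.unique hc h₂) (by decide)
  rw [colorVec]
  rcases ε.trichotomy with rfl | rfl | rfl
  · split_ifs with h₁ h₂ <;> simp_all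
  · exact absurd rfl hε
  · split_ifs with h₁ h₂ <;> simp_all

lemma colorVec_ne_zero (hc : ∀ A ∈ F, ∀ B ∈ F, Disjoint A B → c A ≠ c B) {A : Finset V}
    (hA : A ∈ F) (hε : ε ≠ 0) (hAX : ∀ a ∈ A, X a = ε) : colorVec F c X ≠ 0 := by
  refine Function.ne_iff.2 ⟨⟨c A, mem_image_of_mem c hA⟩, ?_⟩
  rwa [(colorVec_eq_iff hc hε).2 ⟨A, hA, rfl, hAX⟩]

lemma colorVec_neg (hc : ∀ A ∈ F, ∀ B ∈ F, Disjoint A B → c A ≠ c B) (X : SignVec V) :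
    colorVec F c (-X) = -colorVec F c X := by
  have sign_ext : ∀ s s' : SignType, (∀ ε, ε ≠ 0 → (s = ε ↔ s' = ε)) → s = s' := by decide
  ext1 j
  refine sign_ext _ _ fun ε hε ↦ ?_
  rw [colorVec_eq_iff hc hε, hasColor_neg, Pi.neg_apply, neg_eq_iff_eq_neg,
    colorVec_eq_iff hc (SignType.neg_eq_zero_iff.not.2 hε)]

lemma IsFace.colorVec (hc : ∀ A ∈ F, ∀ B ∈ F, Disjoint A B → c A ≠ c B) (h : IsFace X Y) :
    IsFace (colorVec F c X) (colorVec F c Y) := fun _ hj ↦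
  (colorVec_eq_iff hc hj).2 (((colorVec_eq_iff hc hj).1 rfl).of_isFace hj h)

end Colors

theorem exists_le_altLength_colorVec {α : Type*} [LinearOrder α] {n : ℕ}
    {F : Finset (Finset (Fin n))} {c : Finset (Fin n) → α}
    (hc : ∀ A ∈ F, ∀ B ∈ F, Disjoint A B → c A ≠ c B) (σ : Equiv.Perm (Fin n)) :
    ∃ X : SignVec (Fin n), n - altHyp n 2 σ F ≤ altLength (colorVec F c X) := by
  have hne (X : SignVec (Fin n)) (hX : altHyp n 2 σ F < (altLabel (X ∘ σ)).natAbs) :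
      colorVec F c X ≠ 0 := by
    rw [natAbs_altLabel] at hX
    obtain ⟨A, hA, ε, hε, hAX⟩ := exists_mem_of_altHyp_lt hX
    exact colorVec_ne_zero hc hA hε hAX
  have hσ := isTuckerLabelling_altLabel.comp_surjective σ.surjective
  obtain ⟨X, hX⟩ := hσ.exists_card_le_add_natAbs isTuckerLabelling_altLabel (colorVec_neg hc)
    (fun _ _ h ↦ h.colorVec hc) hne
  rw [Fintype.card_fin, natAbs_altLabel] at hX
  exact ⟨X, by omega⟩

end SignVec

open SignVec in
theorem stmt18_general {α : Type*} [LinearOrder α] (n : ℕ) (F : Finset (Finset (Fin n)))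
    (hF : ∀ A ∈ F, A.Nonempty) (c : Finset (Fin n) → α)
    (hc2 : ∀ A ∈ F, ∀ B ∈ F, A ≠ B → Disjoint A B → c A ≠ c B) :
    ∃ f : Fin (n - altNum n 2 F) → Finset (Fin n),
      (∀ i, f i ∈ F) ∧ StrictMono (fun i => c (f i)) ∧
        ∀ i j : Fin (n - altNum n 2 F), Even i.val → ¬ Even j.val → Disjoint (f i) (f j) := by
  obtain ⟨σ, hσ⟩ := exists_altHyp_eq_altNum n 2 F
  have hc : ∀ A ∈ F, ∀ B ∈ F, Disjoint A B → c A ≠ c B := fun A hA B hB h ↦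
    hc2 A hA B hB (h.ne (hF A hA).ne_empty) h
  obtain ⟨X, hX⟩ := exists_le_altLength_colorVec hc σ
  obtain ⟨l, hl, hlen⟩ := exists_isAlternating_length_eq (colorVec F c X)
  obtain ⟨ε, hε, hsign⟩ := hl.exists_sign
  have hlt (i : Fin (n - altNum n 2 F)) : i < l.length := by omega
  have hcolor (i : Fin (n - altNum n 2 F)) :
      HasColor F c X (l[i]'(hlt i)) ((-1) ^ i.val * ε) :=
    (colorVec_eq_iff hc (mul_ne_zero (pow_ne_zero _ (by decide)) hε)).1 (hsign i (hlt i))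
  choose f hfF hfc hfX using hcolor
  refine ⟨f, hfF, fun i j hij ↦ ?_, fun i j hi hj ↦ ?_⟩
  · simp only [hfc]
    exact List.pairwise_iff_getElem.1 hl.pairwise_lt i j (hlt i) (hlt j) hij
  · refine disjoint_of_forall_eq ?_ (hfX i) (hfX j)
    rw [hi.neg_one_pow, (Nat.not_even_iff_odd.1 hj).neg_one_pow, one_mul, neg_one_mul]
    exact SignType.self_eq_neg_iff.not.2 hε

/-- Any proper coloring `c` of the Kneser graph `KG^2(F)` with colors `{1,...,k}`
contains a completely multicolored complete bipartite graph
`K_{⌈r/2⌉, ⌊r/2⌋}` with `r = n - alt_2(F)`, whose `r` distinct colors alternate between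
the two sides with respect to their natural order. This is witnessed by an enumeration
`f` of its vertices along strictly increasing colors (so all colors are distinct, i.e.
the subgraph is colorful), where the vertices at even positions form one side (of size
`⌈r/2⌉`), those at odd positions the other side (of size `⌊r/2⌋`), and every vertex of
one side is disjoint from (adjacent to) every vertex of the other side. -/
theorem stmt18 (n : ℕ) (F : Finset (Finset (Fin n))) (hF : ∀ A ∈ F, A.Nonempty)
    (k : ℕ) (c : Finset (Fin n) → ℕ)
    (hc1 : ∀ A ∈ F, c A ∈ Finset.Icc 1 k)
    (hc2 : ∀ A ∈ F, ∀ B ∈ F, A ≠ B → Disjoint A B → c A ≠ c B) :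
    ∃ f : Fin (n - altNum n 2 F) → Finset (Fin n),
      (∀ i, f i ∈ F) ∧ StrictMono (fun i => c (f i)) ∧
        ∀ i j : Fin (n - altNum n 2 F), Even i.val → ¬ Even j.val → Disjoint (f i) (f j) :=
  stmt18_general n F hF c hc2
end
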